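/- Let A be a piecewise-Koszul algebra with period p = 3 and jump degree d, and let M be a piecewise-Koszul A-module generated in degree 0. Then for every integer k ≥ 1, E_k(M) = ⊕_{n≥0} Ext^{3kn}_A(M,A_0), graded with n-th component Ext^{3kn}_A(M,A_0), is a Koszul module over the algebra E_k(A) = ⊕_{n≥0} Ext^{3kn}_A(A_0,A_0): it admits a minimal graded projective resolution over E_k(A) whose n-th term is generated in degree n. -/

import Mathlib

noncomputable section

/-- The jump function `δ^d_p(n) = ((n − (n mod p))/p)·d + (n mod p)`. -/
def jump (d p n : ℕ) : ℕ := (n - n % p) / p * d + n % p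

/-- A positively graded `F`-algebra `A = ⊕_{i≥0} A_i`. -/
structure GradedAlg (F : Type) [Field F] where
  A : Type
  [ringA : Ring A]
  [algA : Algebra F A]
  grading : ℕ → Submodule F A
  [graded : GradedAlgebra grading]

attribute [instance] GradedAlg.ringA GradedAlg.algA GradedAlg.graded

namespace GradedAlg

variable {F : Type} [Field F] (𝒜 : GradedAlg F)

/-- The graded Jacobson radical `J = ⊕_{i≥1} A_i`, i.e. the irrelevant ideal. -/
def jideal : Ideal 𝒜.A := (HomogeneousIdeal.irrelevant 𝒜.grading).toIdeal

/-- The standing assumptions: `A_0` is a semisimple Artin algebra, `A` is generated in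
degrees 0 and 1 (`A_i · A_j = A_{i+j}`), and `A_1` is finite dimensional over `F`. -/
structure Standing : Prop where
  semisimple : IsSemisimpleRing ↥(𝒜.grading 0)
  artinian : IsArtinianRing ↥(𝒜.grading 0)
  gen01 : ∀ i j : ℕ, 𝒜.grading i * 𝒜.grading j = 𝒜.grading (i + j)
  findim : FiniteDimensional F ↥(𝒜.grading 1)

/-- A (ℤ-)graded module over the graded algebra `𝒜`. -/
structure GMod where
  M : Type
  [acg : AddCommGroup M]
  [modF : Module F M]
  [modA : Module 𝒜.A M]
  [tower : IsScalarTower F 𝒜.A M]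
  [scomm : SMulCommClass 𝒜.A F M]
  grading : ℤ → Submodule F M
  sup_eq_top : (⨆ j : ℤ, grading j) = ⊤
  indep : iSupIndep grading
  smul_mem : ∀ {i : ℕ} {j : ℤ} {a : 𝒜.A} {m : M},
    a ∈ 𝒜.grading i → m ∈ grading j → a • m ∈ grading ((i : ℤ) + j)

attribute [instance] GMod.acg GMod.modF GMod.modA GMod.tower GMod.scomm

variable {𝒜}

/-- A degree-zero morphism of graded modules. -/
structure GHom (M N : 𝒜.GMod) where
  lin : M.M →ₗ[𝒜.A] N.M
  grad : ∀ (j : ℤ) (x : M.M), x ∈ M.grading j → lin x ∈ N.grading j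

/-- A graded module is generated in degree `s` if `A · M_s = M`. -/
def GMod.GenInDeg (M : 𝒜.GMod) (s : ℤ) : Prop :=
  Submodule.span 𝒜.A (M.grading s : Set M.M) = ⊤

/-- `T` is the trivial graded module `A_0 = A/J`, concentrated in degree `0`. -/
def IsTrivialGMod (T : 𝒜.GMod) : Prop :=
  (∀ j : ℤ, j ≠ 0 → T.grading j = ⊥) ∧
    Nonempty (T.M ≃ₗ[𝒜.A] (𝒜.A ⧸ 𝒜.jideal))

/-- A minimal graded projective resolution
`⋯ → P_{n+1} → P_n → ⋯ → P_0 → M → 0` of the graded module `M`,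
with finitely generated terms. -/
structure MinRes (M : 𝒜.GMod) where
  P : ℕ → 𝒜.GMod
  d : ∀ n : ℕ, GHom (P (n + 1)) (P n)
  aug : GHom (P 0) M
  fg : ∀ n, Module.Finite 𝒜.A (P n).M
  projective : ∀ n, Module.Projective 𝒜.A (P n).M
  aug_surj : Function.Surjective aug.lin
  exact_aug : LinearMap.range (d 0).lin = LinearMap.ker aug.lin
  exact : ∀ n, LinearMap.range (d (n + 1)).lin = LinearMap.ker (d n).lin
  minimal : ∀ n, LinearMap.range (d n).lin ≤ 𝒜.jideal • (⊤ : Submodule 𝒜.A (P n).M)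

variable (𝒜)

/-- `M` is a piecewise-Koszul module (period `p`, jump degree `d`, shift `s`):
it has a minimal graded projective resolution with `P_n` generated in degree `δ^d_p(n) + s`. -/
def IsPKMod (p d : ℕ) (s : ℤ) (M : 𝒜.GMod) : Prop :=
  ∃ R : MinRes M, ∀ n : ℕ, (R.P n).GenInDeg ((jump d p n : ℤ) + s)

/-- `A` is a piecewise-Koszul algebra (period `p`, jump degree `d`): the trivial module `T`
admits a minimal graded projective resolution with `P_n` generated in degree `δ^d_p(n)`. -/
def IsPKAlg (p d : ℕ) (T : 𝒜.GMod) : Prop := IsPKMod 𝒜 p d 0 T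

/-- A Koszul module: a minimal graded projective resolution with `P_n` generated in degree `n`. -/
def IsKoszulMod (M : 𝒜.GMod) : Prop :=
  ∃ R : MinRes M, ∀ n : ℕ, (R.P n).GenInDeg (n : ℤ)

variable {𝒜}

section Ext

variable (T : 𝒜.GMod) {M : 𝒜.GMod}

/-- The space of `A`-linear maps `P_n → T` (cochains). -/
abbrev HomSp (R : MinRes M) (n : ℕ) := (R.P n).M →ₗ[𝒜.A] T.M

/-- Precomposition, as an `F`-linear map on cochains. -/
def precompF {M₁ M₂ : 𝒜.GMod} (g : M₁.M →ₗ[𝒜.A] M₂.M) :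
    (M₂.M →ₗ[𝒜.A] T.M) →ₗ[F] (M₁.M →ₗ[𝒜.A] T.M) where
  toFun f := f ∘ₗ g
  map_add' f₁ f₂ := by ext x; simp
  map_smul' c f := by ext x; simp

/-- Cocycles: maps `P_n → T` vanishing on the image of `P_{n+1}`. -/
def cocyc (R : MinRes M) (n : ℕ) : Submodule F (HomSp T R n) :=
  LinearMap.ker (precompF T (R.d n).lin)

/-- Coboundaries: maps `P_n → T` factoring through `d_{n-1}`. -/
def cobound (R : MinRes M) : (n : ℕ) → Submodule F (HomSp T R n)
  | 0 => ⊥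
  | n + 1 => LinearMap.range (precompF T (R.d n).lin)

/-- The coboundaries, viewed inside the cocycles. -/
def extRel (R : MinRes M) (n : ℕ) : Submodule F ↥(cocyc T R n) :=
  (cobound T R n).comap (cocyc T R n).subtype

/-- `Ext^n_A(M, T)`, computed from the resolution `R` of `M`. -/
abbrev ExtQ (R : MinRes M) (n : ℕ) := ↥(cocyc T R n) ⧸ extRel T R n

/-- The class in `Ext^n_A(M,T)` of a cocycle. -/
def extCls {R : MinRes M} {n : ℕ} {f : HomSp T R n} (hf : f ∈ cocyc T R n) :
    ExtQ T R n :=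
  Submodule.Quotient.mk ⟨f, hf⟩

/-- Cochains of shift-degree `j`: maps `P_n → T` vanishing on every `(P_n)_i` with `i ≠ j`. -/
def homDeg (R : MinRes M) (n : ℕ) (j : ℤ) : Submodule F (HomSp T R n) where
  carrier := {f | ∀ i : ℤ, i ≠ j → ∀ x ∈ (R.P n).grading i, f x = 0}
  add_mem' := fun hf hg i hi x hx => by
    simp only [LinearMap.add_apply, hf i hi x hx, hg i hi x hx, add_zero]
  zero_mem' := fun i hi x hx => rfl
  smul_mem' := fun c f hf i hi x hx => by
    simp only [LinearMap.smul_apply, hf i hi x hx, smul_zero]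

/-- The shift-degree `j` component `Ext^n_A(M,T)_j`. -/
def extComp (R : MinRes M) (n : ℕ) (j : ℤ) : Submodule F (ExtQ T R n) :=
  Submodule.map (extRel T R n).mkQ ((homDeg T R n j).comap (cocyc T R n).subtype)

/-- Transport `Ext` along an equality of cohomological degrees. -/
def extCast (R : MinRes M) {a b : ℕ} (h : a = b) : ExtQ T R a ≃ₗ[F] ExtQ T R b :=
  h ▸ LinearEquiv.refl F (ExtQ T R a)

/-- A chain map lifting of a cochain `g : P_j → T` over the resolutions `RM` of `M`
and `RT` of `T`. -/
structure ChainLift (RT : MinRes T) (RM : MinRes M) (j : ℕ)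
    (g : (RM.P j).M →ₗ[𝒜.A] T.M) where
  ℓ : ∀ m k : ℕ, m = k + j → ((RM.P m).M →ₗ[𝒜.A] (RT.P k).M)
  comm_aug : RT.aug.lin ∘ₗ ℓ j 0 (by omega) = g
  comm : ∀ k : ℕ, (RT.d k).lin ∘ₗ ℓ (k + j + 1) (k + 1) (by omega) =
    ℓ (k + j) k rfl ∘ₗ (RM.d (k + j)).lin

/-- `μ` is the (bigraded family of) Yoneda product(s)
`Ext^i(T,T) ⊗ Ext^j(M,T) → Ext^{i+j}(M,T)`: it is computed by composing a cocycle
`f : P_i → T` with a chain lifting of a cocycle `g : Q_j → T`. -/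
def IsYonedaMul (RT : MinRes T) (RM : MinRes M)
    (μ : ∀ i j : ℕ, ExtQ T RT i →ₗ[F] ExtQ T RM j →ₗ[F] ExtQ T RM (i + j)) : Prop :=
  ∀ (i j : ℕ) (f : HomSp T RT i) (hf : f ∈ cocyc T RT i)
    (g : HomSp T RM j) (hg : g ∈ cocyc T RM j)
    (L : ChainLift T RT RM j g)
    (hc : f ∘ₗ L.ℓ (i + j) i (by omega) ∈ cocyc T RM (i + j)),
    μ i j (extCls T hf) (extCls T hg) = extCls T hc

/-- `E(A) = Ext^*_A(A_0,A_0)` is generated in the ext-degrees belonging to `S`. -/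
def ExtGenIn (RT : MinRes T)
    (μ : ∀ i j : ℕ, ExtQ T RT i →ₗ[F] ExtQ T RT j →ₗ[F] ExtQ T RT (i + j))
    (S : Set ℕ) : Prop :=
  ∀ W : (n : ℕ) → Submodule F (ExtQ T RT n),
    (∀ n ∈ S, W n = ⊤) →
    (∀ (i j : ℕ) (x : ExtQ T RT i) (y : ExtQ T RT j),
      x ∈ W i → y ∈ W j → μ i j x y ∈ W (i + j)) →
    ∀ n, W n = ⊤

/-- `E(M) = Ext^*_A(M,A_0)` is generated in degree `0` as a graded `E(A)`-module. -/
def ExtModGenInZero (RT : MinRes T) (RM : MinRes M)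
    (μ : ∀ i j : ℕ, ExtQ T RT i →ₗ[F] ExtQ T RM j →ₗ[F] ExtQ T RM (i + j)) : Prop :=
  ∀ W : (n : ℕ) → Submodule F (ExtQ T RM n),
    W 0 = ⊤ →
    (∀ (i j : ℕ) (x : ExtQ T RT i) (y : ExtQ T RM j),
      y ∈ W j → μ i j x y ∈ W (i + j)) →
    ∀ n, W n = ⊤

end Ext

/-- `JM` is (a graded module isomorphic to) the submodule `J·M` of `M`. -/
def IsJM (M JM : 𝒜.GMod) : Prop :=
  ∃ e : JM.M ≃ₗ[𝒜.A] ↥(𝒜.jideal • (⊤ : Submodule 𝒜.A M.M)),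
    ∀ (j : ℤ) (x : JM.M), x ∈ JM.grading j ↔ ((e x : M.M) ∈ M.grading j)

/-- `Q` is (a graded module isomorphic to) the quotient `M/JM`. -/
def IsQuotJM (M Q : 𝒜.GMod) : Prop :=
  ∃ e : Q.M ≃ₗ[𝒜.A] (M.M ⧸ (𝒜.jideal • (⊤ : Submodule 𝒜.A M.M))),
    ∀ j : ℤ, Q.grading j = Submodule.map
      ((e.symm.toLinearMap ∘ₗ (𝒜.jideal • (⊤ : Submodule 𝒜.A M.M)).mkQ).restrictScalars F)
      (M.grading j)

/-- `W` is (isomorphic to) the `n`-th syzygy `Ω^n(M)` of `M` in the minimal graded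
projective resolution `R`. -/
def IsSyzygy {M : 𝒜.GMod} (R : MinRes M) : ℕ → 𝒜.GMod → Prop
  | 0, W => ∃ e : W.M ≃ₗ[𝒜.A] M.M,
      ∀ (j : ℤ) (x : W.M), x ∈ W.grading j ↔ e x ∈ M.grading j
  | 1, W => ∃ e : W.M ≃ₗ[𝒜.A] ↥(LinearMap.ker R.aug.lin),
      ∀ (j : ℤ) (x : W.M), x ∈ W.grading j ↔ ((e x : (R.P 0).M) ∈ (R.P 0).grading j)
  | (n + 2), W => ∃ e : W.M ≃ₗ[𝒜.A] ↥(LinearMap.ker (R.d n).lin),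
      ∀ (j : ℤ) (x : W.M), x ∈ W.grading j ↔ ((e x : (R.P (n + 1)).M) ∈ (R.P (n + 1)).grading j)

end GradedAlg

/-!
Since the resolutions are minimal and `A_0` is killed by `J`, every cochain is a cocycle and no
nonzero cochain is a coboundary, so `⊕_n Ext^{cn}(M, A_0)` is a module of cochains
`P_{cn} → A_0` depending only on the complex `P`, acted on by Yoneda products. This makes sense for
every minimal exact complex `P` of projectives, resolving a module or not, whose `n`-th term is
generated in degree `δ n`.

Because `A_0` is semisimple, `P_0 / J P_0` is a summand of a power of `A_0`, with a minimal
resolution `Q` that is a summand of a power of the resolution of `A_0`; its module of cochains is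
projective over the Ext algebra and generated in degree `0`. Lift `P_0 → P_0 / J P_0` to a chain map
`α : P → Q`. Comparing generation degrees, `α` is injective modulo `J` in every degree, and hence
split: its cokernel consists of projectives, is minimal, and is exact in positive degrees. On
cochains `α` is surjective, with kernel the cochains on the cokernel in degrees `n ≥ 1`, as `α` is
onto modulo `J` in degree `0`. If `δ (c + n) = δ n + s`, the truncation of the cokernel at `c`,
shifted by `s`, is again a complex of the kind we started with, and iterating gives the linear
resolution.
-/

namespace GradedAlg

section GradedModules

variable {F : Type} [Field F] {𝒜 : GradedAlg F}

theorem iSupIndep_of_separating {X Y : Type} [AddCommGroup X] [Module F X] [AddCommGroup Y]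
    [Module F Y] {ι : Type} (g : ι → Submodule F X) (p : ι → X →ₗ[F] Y)
    (hne : ∀ i j, i ≠ j → ∀ x ∈ g i, p j x = 0) (hinj : ∀ j, ∀ x ∈ g j, p j x = 0 → x = 0) :
    iSupIndep g := by
  intro i
  rw [Submodule.disjoint_def]
  intro x hx hx'
  have hle : (⨆ (j : ι) (_ : j ≠ i), g j) ≤ LinearMap.ker (p i) :=
    iSup₂_le fun j hj y hy => hne j i hj y hy
  exact hinj i x hx (hle hx')

namespace GMod

variable (X : 𝒜.GMod)

instance : DirectSum.Decomposition X.grading :=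
  (DirectSum.isInternal_submodule_of_iSupIndep_of_iSup_eq_top X.indep
    X.sup_eq_top).chooseDecomposition _

/-- The projection of a graded module onto its component of degree `j`. -/
def proj (j : ℤ) : X.M →ₗ[F] X.M :=
  (X.grading j).subtype ∘ₗ DirectSum.component F ℤ _ j ∘ₗ
    (DirectSum.decomposeLinearEquiv X.grading).toLinearMap

theorem proj_mem (j : ℤ) (x : X.M) : X.proj j x ∈ X.grading j :=
  (DirectSum.decompose X.grading x j).2

theorem proj_of_mem {j : ℤ} {x : X.M} (h : x ∈ X.grading j) : X.proj j x = x :=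
  DirectSum.decompose_of_mem_same X.grading h

theorem proj_of_mem_of_ne {i j : ℤ} {x : X.M} (h : x ∈ X.grading i) (hij : i ≠ j) :
    X.proj j x = 0 :=
  DirectSum.decompose_of_mem_ne X.grading h hij

theorem smul_proj {i : ℕ} {a : 𝒜.A} (ha : a ∈ 𝒜.grading i) (j : ℤ) (x : X.M) :
    a • X.proj j x = X.proj (i + j) (a • x) := by
  refine DirectSum.Decomposition.inductionOn X.grading (by simp) (fun {l} x => ?_)
    (fun x y hx hy => by simp only [smul_add, map_add, hx, hy]) x
  have hax := X.smul_mem ha x.2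
  by_cases h : l = j
  · subst h
    rw [X.proj_of_mem x.2, X.proj_of_mem hax]
  · rw [X.proj_of_mem_of_ne x.2 h, X.proj_of_mem_of_ne hax (by omega), smul_zero]

variable {X} in
theorem linearMap_ext {V : Type} [AddCommGroup V] [Module 𝒜.A V] {f g : X.M →ₗ[𝒜.A] V}
    (h : ∀ j, ∀ x ∈ X.grading j, f x = g x) : f = g :=
  LinearMap.ext <| DirectSum.Decomposition.inductionOn X.grading (by simp only [map_zero])
    (fun x => h _ x x.2) (fun x y hx hy => by rw [map_add, map_add, hx, hy])

end GMod

/-- `𝒜.KilledByJ V` says that the irrelevant ideal `J` annihilates `V`, that is, that `V` is a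
module over `A_0 = A/J`. -/
abbrev KilledByJ (𝒜 : GradedAlg F) (V : Type) [AddCommGroup V] [Module 𝒜.A V] : Prop :=
  Module.IsTorsionBySet 𝒜.A V (𝒜.jideal : Set 𝒜.A)

section Irrelevant

variable {X Y V : Type} [AddCommGroup X] [Module 𝒜.A X] [AddCommGroup Y] [Module 𝒜.A Y]
  [AddCommGroup V] [Module 𝒜.A V]

/-- The projection of `A` onto `A_0`, as an endomorphism of `A`. -/
abbrev projZero : 𝒜.A →+* 𝒜.A := GradedRing.projZeroRingHom 𝒜.grading

theorem projZero_mem (a : 𝒜.A) : projZero a ∈ 𝒜.grading 0 :=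
  (DirectSum.decompose 𝒜.grading a 0).2

theorem projZero_of_mem {a : 𝒜.A} (h : a ∈ 𝒜.grading 0) : projZero a = a :=
  DirectSum.decompose_of_mem_same 𝒜.grading h

theorem projZero_of_mem_of_ne {i : ℕ} (hi : i ≠ 0) {a : 𝒜.A} (h : a ∈ 𝒜.grading i) :
    projZero a = 0 :=
  DirectSum.decompose_of_mem_ne 𝒜.grading h hi

theorem mem_jideal {a : 𝒜.A} : a ∈ 𝒜.jideal ↔ projZero a = 0 :=
  HomogeneousIdeal.mem_irrelevant_iff 𝒜.grading a

instance : 𝒜.jideal.IsTwoSided :=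
  ⟨fun b ha => by rw [mem_jideal, map_mul, mem_jideal.1 ha, zero_mul]⟩

theorem sub_projZero_mem (a : 𝒜.A) : a - projZero a ∈ 𝒜.jideal := by
  rw [mem_jideal, map_sub, projZero_of_mem (projZero_mem a), sub_self]

theorem map_mem_jideal_smul_top (f : X →ₗ[𝒜.A] Y) {x : X}
    (hx : x ∈ 𝒜.jideal • (⊤ : Submodule 𝒜.A X)) : f x ∈ 𝒜.jideal • (⊤ : Submodule 𝒜.A Y) :=
  Submodule.smul_top_le_comap_smul_top 𝒜.jideal f hx

theorem KilledByJ.map_eq_zero (hV : 𝒜.KilledByJ V) (f : X →ₗ[𝒜.A] V) {x : X}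
    (hx : x ∈ 𝒜.jideal • (⊤ : Submodule 𝒜.A X)) : f x = 0 := by
  have hle : 𝒜.jideal • (⊤ : Submodule 𝒜.A X) ≤ LinearMap.ker f :=
    Submodule.smul_le.2 fun a ha y _ => by
      rw [LinearMap.mem_ker, map_smul]
      exact @hV (f y) ⟨a, ha⟩
  exact hle hx

variable (𝒜 X) in
theorem killedByJ_quotient : 𝒜.KilledByJ (X ⧸ (𝒜.jideal • (⊤ : Submodule 𝒜.A X))) :=
  Module.isTorsionBySet_quotient_ideal_smul X 𝒜.jideal

theorem isSemisimpleRing_quotient_jideal (hs : IsSemisimpleRing (𝒜.grading 0)) :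
    IsSemisimpleRing (𝒜.A ⧸ 𝒜.jideal) := by
  have hs' : IsSemisimpleRing (SetLike.GradeZero.subring 𝒜.grading) := hs
  refine RingHom.isSemisimpleRing_of_surjective
    ((Ideal.Quotient.mk 𝒜.jideal).comp (SetLike.GradeZero.subring 𝒜.grading).subtype) ?_
  rintro ⟨a⟩
  refine ⟨⟨projZero a, projZero_mem a⟩, (Ideal.Quotient.eq.2 (sub_projZero_mem a)).symm⟩

theorem KilledByJ.isSemisimpleModule (hV : 𝒜.KilledByJ V) (hs : IsSemisimpleRing (𝒜.grading 0)) :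
    IsSemisimpleModule 𝒜.A V := by
  have := isSemisimpleRing_quotient_jideal hs
  let _ : Module (𝒜.A ⧸ 𝒜.jideal) V := hV.module
  exact hV.isSemisimpleModule_iff.1 inferInstance

end Irrelevant

end GradedModules

section Morphisms

variable {F : Type} [Field F] {𝒜 : GradedAlg F} {W X Y Z : 𝒜.GMod}

namespace GHom

theorem ext {f g : GHom X Y} (h : f.lin = g.lin) : f = g := by
  cases f
  cases g
  congr

/-- The composition of two morphisms of graded modules. -/
def comp (g : GHom Y Z) (f : GHom X Y) : GHom X Z where
  lin := g.lin ∘ₗ f.lin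
  grad j x hx := g.grad j _ (f.grad j x hx)

/-- The identity morphism of a graded module. -/
def id (X : 𝒜.GMod) : GHom X X := ⟨LinearMap.id, fun _ _ h => h⟩

theorem proj_apply (f : GHom X Y) (j : ℤ) (x : X.M) :
    Y.proj j (f.lin x) = f.lin (X.proj j x) := by
  refine DirectSum.Decomposition.inductionOn X.grading (by simp only [map_zero]) (fun {l} x => ?_)
    (fun x y hx hy => by simp only [map_add, hx, hy]) x
  by_cases h : l = j
  · subst h
    rw [X.proj_of_mem x.2, Y.proj_of_mem (f.grad _ _ x.2)]
  · rw [X.proj_of_mem_of_ne x.2 h, Y.proj_of_mem_of_ne (f.grad _ _ x.2) h, map_zero]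

/-- The sum over `j` of the components `X_j → Y_j` of a linear map, as an `F`-linear map. -/
def diagonalPart (h : X.M →ₗ[𝒜.A] Y.M) : X.M →ₗ[F] Y.M :=
  DirectSum.toModule F ℤ Y.M (fun j => Y.proj j ∘ₗ h.restrictScalars F ∘ₗ (X.grading j).subtype) ∘ₗ
    (DirectSum.decomposeLinearEquiv X.grading).toLinearMap

theorem diagonalPart_apply_of_mem (h : X.M →ₗ[𝒜.A] Y.M) {j : ℤ} {x : X.M} (hx : x ∈ X.grading j) :
    diagonalPart h x = Y.proj j (h x) := by
  have hdec : DirectSum.decomposeLinearEquiv X.grading x = DirectSum.lof F ℤ _ j ⟨x, hx⟩ :=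
    DirectSum.decompose_of_mem X.grading hx
  simp only [diagonalPart, LinearMap.comp_apply, LinearEquiv.coe_coe, hdec, DirectSum.toModule_lof]
  rfl

theorem diagonalPart_smul (h : X.M →ₗ[𝒜.A] Y.M) (a : 𝒜.A) (x : X.M) :
    diagonalPart h (a • x) = a • diagonalPart h x := by
  induction a using DirectSum.Decomposition.inductionOn 𝒜.grading with
  | zero => simp only [zero_smul, map_zero]
  | add a b ha hb => simp only [add_smul, map_add, ha, hb]
  | @homogeneous i a =>
    induction x using DirectSum.Decomposition.inductionOn X.grading with
    | zero => simp only [smul_zero, map_zero]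
    | add x y hx hy => simp only [smul_add, map_add, hx, hy]
    | homogeneous x =>
      rw [diagonalPart_apply_of_mem h (X.smul_mem a.2 x.2), diagonalPart_apply_of_mem h x.2,
        map_smul, Y.smul_proj a.2]

/-- The degree-zero part of a linear map between graded modules. -/
def degZero (h : X.M →ₗ[𝒜.A] Y.M) : GHom X Y where
  lin := { diagonalPart h with map_smul' := diagonalPart_smul h }
  grad j x hx := by
    change diagonalPart h x ∈ _
    rw [diagonalPart_apply_of_mem h hx]
    exact Y.proj_mem j _

theorem degZero_apply_of_mem (h : X.M →ₗ[𝒜.A] Y.M) {j : ℤ} {x : X.M} (hx : x ∈ X.grading j) :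
    (degZero h).lin x = Y.proj j (h x) :=
  diagonalPart_apply_of_mem h hx

theorem comp_degZero (g : GHom Y Z) (h : X.M →ₗ[𝒜.A] Y.M) :
    g.lin ∘ₗ (degZero h).lin = (degZero (g.lin ∘ₗ h)).lin :=
  GMod.linearMap_ext fun j x hx => by
    rw [LinearMap.comp_apply, degZero_apply_of_mem _ hx, degZero_apply_of_mem _ hx, ← g.proj_apply,
      LinearMap.comp_apply]

theorem degZero_comp (h : X.M →ₗ[𝒜.A] Y.M) (f : GHom W X) :
    (degZero h).lin ∘ₗ f.lin = (degZero (h ∘ₗ f.lin)).lin :=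
  GMod.linearMap_ext fun j x hx => by
    rw [LinearMap.comp_apply, degZero_apply_of_mem _ (f.grad j x hx), degZero_apply_of_mem _ hx,
      LinearMap.comp_apply]

end GHom

namespace GMod.GenInDeg

theorem proj_eq_zero_of_lt {s : ℤ} (h : X.GenInDeg s) {j : ℤ} (hj : j < s) (x : X.M) :
    X.proj j x = 0 := by
  have hx : x ∈ Submodule.span 𝒜.A (X.grading s : Set X.M) := h ▸ Submodule.mem_top
  induction hx using Submodule.span_induction generalizing j with
  | mem x hx => exact X.proj_of_mem_of_ne hx (by omega)
  | zero => exact map_zero _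
  | add x y _ _ hx hy => rw [map_add, hx hj, hy hj, add_zero]
  | smul a x _ hx =>
    induction a using DirectSum.Decomposition.inductionOn 𝒜.grading with
    | zero => rw [zero_smul, map_zero]
    | add a b ha hb => rw [add_smul, map_add, ha, hb, add_zero]
    | @homogeneous i a =>
      rw [show j = i + (j - i) by omega, ← X.smul_proj a.2, hx (by omega), smul_zero]

theorem proj_smul {s : ℤ} (h : X.GenInDeg s) (a : 𝒜.A) (x : X.M) :
    X.proj s (a • x) = projZero a • X.proj s x := by
  induction a using DirectSum.Decomposition.inductionOn 𝒜.grading with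
  | zero => simp only [zero_smul, map_zero]
  | add a b ha hb => simp only [add_smul, map_add, ha, hb]
  | @homogeneous i a =>
    rw [show s = i + (s - i) by omega, ← X.smul_proj a.2]
    rcases Nat.eq_zero_or_pos i with rfl | hi
    · rw [projZero_of_mem a.2, Nat.cast_zero, sub_zero, zero_add]
    · rw [projZero_of_mem_of_ne hi.ne' a.2, h.proj_eq_zero_of_lt (by omega), smul_zero, zero_smul]

theorem sub_proj_mem {s : ℤ} (h : X.GenInDeg s) (x : X.M) :
    x - X.proj s x ∈ 𝒜.jideal • (⊤ : Submodule 𝒜.A X.M) := by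
  have hx : x ∈ Submodule.span 𝒜.A (X.grading s : Set X.M) := h ▸ Submodule.mem_top
  induction hx using Submodule.span_induction with
  | mem x hx => rw [X.proj_of_mem hx, sub_self]; exact zero_mem _
  | zero => rw [map_zero, sub_zero]; exact zero_mem _
  | add x y _ _ hx hy => rw [map_add, add_sub_add_comm]; exact add_mem hx hy
  | smul a x _ hx =>
    have hsplit : a • x - projZero a • X.proj s x =
        a • (x - X.proj s x) + (a - projZero a) • X.proj s x := by
      rw [smul_sub, sub_smul]; abel
    rw [h.proj_smul, hsplit]
    exact add_mem (Submodule.smul_mem _ _ hx)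
      (Submodule.smul_mem_smul (sub_projZero_mem a) Submodule.mem_top)

theorem mem_jideal_smul_top_iff {s : ℤ} (h : X.GenInDeg s) {x : X.M} :
    x ∈ 𝒜.jideal • (⊤ : Submodule 𝒜.A X.M) ↔ X.proj s x = 0 := by
  refine ⟨fun hx => ?_, fun hx => by simpa only [hx, sub_zero] using h.sub_proj_mem x⟩
  refine Submodule.smul_induction_on hx (fun a ha y _ => ?_) (fun x y hx hy => ?_)
  · rw [h.proj_smul, mem_jideal.1 ha, zero_smul]
  · rw [map_add, hx, hy, add_zero]

theorem range_le_jideal_smul_top {s t : ℤ} (hX : X.GenInDeg t) (hY : Y.GenInDeg s) (hst : s < t)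
    (f : GHom X Y) : LinearMap.range f.lin ≤ 𝒜.jideal • (⊤ : Submodule 𝒜.A Y.M) := by
  rintro _ ⟨x, rfl⟩
  rw [hY.mem_jideal_smul_top_iff, f.proj_apply, hX.proj_eq_zero_of_lt hst, map_zero]

theorem eq_degZero_of_sub_mem {s : ℤ} (hX : X.GenInDeg s) (hY : Y.GenInDeg s) (f : GHom X Y)
    (g : X.M →ₗ[𝒜.A] Y.M)
    (h : ∀ x, f.lin x - g x ∈ 𝒜.jideal • (⊤ : Submodule 𝒜.A Y.M)) :
    f = GHom.degZero g := by
  refine GHom.ext (LinearMap.ext_on hX fun x hx => ?_)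
  have hproj := hY.mem_jideal_smul_top_iff.1 (h x)
  rw [map_sub, Y.proj_of_mem (f.grad s x hx), sub_eq_zero] at hproj
  rw [hproj, GHom.degZero_apply_of_mem g hx]

theorem eq_of_sub_mem {s : ℤ} (hX : X.GenInDeg s) (hY : Y.GenInDeg s) (f g : GHom X Y)
    (h : ∀ x, f.lin x - g.lin x ∈ 𝒜.jideal • (⊤ : Submodule 𝒜.A Y.M)) : f = g :=
  (hX.eq_degZero_of_sub_mem hY f g.lin h).trans
    (hX.eq_degZero_of_sub_mem hY g g.lin fun x => by rw [sub_self]; exact zero_mem _).symm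

theorem of_surjective {s : ℤ} (h : X.GenInDeg s) (f : GHom X Y)
    (hf : Function.Surjective f.lin) : Y.GenInDeg s := by
  have hspan : Submodule.span 𝒜.A (f.lin '' X.grading s) = ⊤ := by
    rw [← Submodule.map_span, h, Submodule.map_top, LinearMap.range_eq_top.2 hf]
  refine top_le_iff.1 (hspan ▸ Submodule.span_mono ?_)
  rintro _ ⟨x, hx, rfl⟩
  exact f.grad _ _ hx

end GMod.GenInDeg

end Morphisms

section Constructions

variable {F : Type} [Field F] {𝒜 : GradedAlg F}

theorem iSup_eq_top_of_surjective {X Y ι : Type} [AddCommGroup X] [Module F X] [AddCommGroup Y]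
    [Module F Y] {g : ι → Submodule F X} {g' : ι → Submodule F Y} (hg : ⨆ j, g j = ⊤)
    (f : X →ₗ[F] Y) (hf : Function.Surjective f) (hmap : ∀ j, g j ≤ (g' j).comap f) :
    ⨆ j, g' j = ⊤ := by
  rw [eq_top_iff, ← LinearMap.range_eq_top.2 hf, ← Submodule.map_top, ← hg, Submodule.map_iSup]
  exact iSup_mono fun j => Submodule.map_le_iff_le_comap.2 (hmap j)

namespace GMod

variable {X Y : 𝒜.GMod}

/-- The image of a morphism of graded modules, with the induced grading. -/
@[reducible] def range (f : GHom X Y) : 𝒜.GMod where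
  M := LinearMap.range f.lin
  scomm := ⟨fun a c y => Subtype.ext (smul_comm a c (y : Y.M))⟩
  tower := ⟨fun a c y => Subtype.ext (smul_assoc a c (y : Y.M))⟩
  grading j := (Y.grading j).comap ((LinearMap.range f.lin).subtype.restrictScalars F)
  sup_eq_top := iSup_eq_top_of_surjective X.sup_eq_top (f.lin.rangeRestrict.restrictScalars F)
    f.lin.surjective_rangeRestrict f.grad
  indep := iSupIndep_of_separating _
    (fun j => Y.proj j ∘ₗ ((LinearMap.range f.lin).subtype.restrictScalars F))
    (fun _ _ hij _ hy => Y.proj_of_mem_of_ne hy hij)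
    (fun _ _ hy h => Subtype.ext ((Y.proj_of_mem hy).symm.trans h))
  smul_mem ha hy := Y.smul_mem ha hy

/-- The graded module `X^r`. -/
@[reducible] def pow (X : 𝒜.GMod) (r : ℕ) : 𝒜.GMod where
  M := Fin r → X.M
  grading j := Submodule.pi Set.univ (fun _ => X.grading j)
  sup_eq_top := by
    rw [eq_top_iff, ← LinearMap.iSup_range_single]
    refine iSup_le fun i => ?_
    rw [LinearMap.range_eq_map, ← X.sup_eq_top, Submodule.map_iSup]
    exact iSup_mono fun j => Submodule.map_le_iff_le_comap.2
      (Submodule.le_comap_single_pi fun _ => X.grading j)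
  indep := iSupIndep_of_separating _ (fun j => (X.proj j).compLeft (Fin r))
    (fun _ _ hij _ hx => funext fun l => X.proj_of_mem_of_ne (hx l trivial) hij)
    (fun _ _ hx h => funext fun l => (X.proj_of_mem (hx l trivial)).symm.trans (congrFun h l))
  smul_mem ha hx := fun l _ => X.smul_mem ha (hx l trivial)

theorem GenInDeg.pow {s : ℤ} (h : X.GenInDeg s) (r : ℕ) : (X.pow r).GenInDeg s := by
  rw [GenInDeg, eq_top_iff, ← LinearMap.iSup_range_single]
  refine iSup_le fun i => ?_
  rw [LinearMap.range_eq_map, ← h, Submodule.map_span]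
  refine Submodule.span_mono ?_
  rintro _ ⟨y, hy, rfl⟩
  exact Submodule.le_comap_single_pi (fun _ => X.grading s) hy

/-- The shift of a graded module, `X.shift s` having `X_{j+s}` in degree `j`. -/
@[reducible] def shift (X : 𝒜.GMod) (s : ℤ) : 𝒜.GMod where
  M := X.M
  grading j := X.grading (j + s)
  sup_eq_top := X.sup_eq_top ▸ (Equiv.addRight s).iSup_comp (g := X.grading)
  indep := X.indep.comp (Equiv.addRight s).injective
  smul_mem ha hx := add_assoc (_ : ℤ) _ s ▸ X.smul_mem ha hx

theorem GenInDeg.shift {s t t' : ℤ} (h : X.GenInDeg t) (ht : t' + s = t) :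
    (X.shift s).GenInDeg t' := by
  subst ht
  exact h

end GMod

namespace GHom

variable {X Y : 𝒜.GMod}

/-- The inclusion of the image of a morphism. -/
def rangeSubtype (f : GHom X Y) : GHom (GMod.range f) Y :=
  ⟨(LinearMap.range f.lin).subtype, fun _ _ h => h⟩

/-- A morphism, corestricted to its image. -/
def rangeRestrict (f : GHom X Y) : GHom X (GMod.range f) := ⟨f.lin.rangeRestrict, f.grad⟩

theorem rangeRestrict_comp_rangeSubtype (e : GHom X X) (he : e.lin ∘ₗ e.lin = e.lin) :
    e.rangeRestrict.lin ∘ₗ e.rangeSubtype.lin = LinearMap.id := by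
  ext ⟨_, y, rfl⟩
  exact LinearMap.congr_fun he y

/-- The morphism `X^r → Y^r` induced by a morphism `X → Y`. -/
def pow (f : GHom X Y) (r : ℕ) : GHom (X.pow r) (Y.pow r) where
  lin := f.lin.compLeft (Fin r)
  grad j _ hx := fun l _ => f.grad j _ (hx l trivial)

/-- The inclusion of the `i`-th factor into `X^r`. -/
def single (X : 𝒜.GMod) {r : ℕ} (i : Fin r) : GHom X (X.pow r) where
  lin := LinearMap.single 𝒜.A (fun _ => X.M) i
  grad j _ hx := Submodule.le_comap_single_pi (fun _ => X.grading j) hx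

/-- The projection of `X^r` onto the `i`-th factor. -/
def eval (X : 𝒜.GMod) {r : ℕ} (i : Fin r) : GHom (X.pow r) X where
  lin := LinearMap.proj i
  grad _ _ hx := hx i trivial

/-- The shift of a morphism of graded modules. -/
def shift (f : GHom X Y) (s : ℤ) : GHom (X.shift s) (Y.shift s) where
  lin := f.lin
  grad j x hx := f.grad (j + s) x hx

theorem mapQ_injective {s : ℤ} (hX : X.GenInDeg s) (hY : Y.GenInDeg s) (f : GHom X Y)
    (hf : LinearMap.ker f.lin ≤ 𝒜.jideal • (⊤ : Submodule 𝒜.A X.M)) :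
    Function.Injective
      (Submodule.mapQ _ _ f.lin (Submodule.smul_top_le_comap_smul_top 𝒜.jideal _)) := by
  rw [injective_iff_map_eq_zero]
  rintro ⟨x⟩ hx
  have hfx : Y.proj s (f.lin x) = 0 :=
    hY.mem_jideal_smul_top_iff.1 ((Submodule.Quotient.mk_eq_zero _).1 hx)
  rw [f.proj_apply] at hfx
  refine (Submodule.Quotient.mk_eq_zero _).2 (hX.mem_jideal_smul_top_iff.2 ?_)
  simpa only [X.proj_of_mem (X.proj_mem s x)] using hX.mem_jideal_smul_top_iff.1 (hf hfx)

theorem exists_retraction (hs : IsSemisimpleRing (𝒜.grading 0)) {s : ℤ} (hX : X.GenInDeg s)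
    (hY : Y.GenInDeg s) (hP : Module.Projective 𝒜.A Y.M) (f : GHom X Y)
    (hf : LinearMap.ker f.lin ≤ 𝒜.jideal • (⊤ : Submodule 𝒜.A X.M)) :
    ∃ r : GHom Y X, r.lin ∘ₗ f.lin = LinearMap.id := by
  have := (killedByJ_quotient 𝒜 Y.M).isSemisimpleModule hs
  obtain ⟨ρ, hρ⟩ := IsSemisimpleModule.extension_property _ (mapQ_injective hX hY f hf)
    LinearMap.id
  obtain ⟨r, hr⟩ := Module.projective_lifting_property (Submodule.mkQ _) (ρ ∘ₗ Submodule.mkQ _)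
    (Submodule.mkQ_surjective _)
  have hrf : ∀ x, x - r (f.lin x) ∈ 𝒜.jideal • (⊤ : Submodule 𝒜.A X.M) := fun x => by
    rw [← Submodule.Quotient.eq]
    exact (LinearMap.congr_fun hρ (Submodule.Quotient.mk x)).symm.trans
      (LinearMap.congr_fun hr (f.lin x)).symm
  refine ⟨degZero r, ?_⟩
  rw [degZero_comp, ← hX.eq_degZero_of_sub_mem hX (GHom.id X) (r ∘ₗ f.lin) hrf]
  rfl

end GHom

end Constructions

section Complexes

variable {F : Type} [Field F] {𝒜 : GradedAlg F}

theorem comp_smul_of_field {U V W : 𝒜.GMod} (t : F) (f : V.M →ₗ[𝒜.A] W.M) (g : U.M →ₗ[𝒜.A] V.M) :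
    f ∘ₗ (t • g) = t • (f ∘ₗ g) :=
  LinearMap.ext fun x => LinearMap.map_smul_of_tower f t (g x)

theorem exists_comp_eq_of_range_le {A X Y Z : Type} [Ring A] [AddCommGroup X] [Module A X]
    [AddCommGroup Y] [Module A Y] [AddCommGroup Z] [Module A Z] [Module.Projective A X]
    (u : X →ₗ[A] Z) (v : Y →ₗ[A] Z) (h : LinearMap.range u ≤ LinearMap.range v) :
    ∃ w : X →ₗ[A] Y, v ∘ₗ w = u := by
  obtain ⟨w, hw⟩ := Module.projective_lifting_property v.rangeRestrict
    (u.codRestrict _ fun x => h ⟨x, rfl⟩) v.surjective_rangeRestrict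
  exact ⟨w, LinearMap.ext fun x => congrArg Subtype.val (LinearMap.congr_fun hw x)⟩

theorem exists_seq_of_step {α : ℕ → Type} (r : ∀ n, α n → α (n + 1) → Prop) {a : α 0} {b : α 1}
    (hab : r 0 a b) (step : ∀ n a b, r n a b → ∃ c, r (n + 1) b c) :
    ∃ s : ∀ n, α n, s 0 = a ∧ ∀ n, r n (s n) (s (n + 1)) := by
  choose next hnext using step
  let pairs : ∀ n, {p : α n × α (n + 1) // r n p.1 p.2} := fun n =>
    Nat.rec ⟨(a, b), hab⟩ (fun n p => ⟨(p.1.2, next n _ _ p.2), hnext n _ _ p.2⟩) n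
  exact ⟨fun n => (pairs n).1.1, rfl, fun n => (pairs n).2⟩

/-- A minimal complex `⋯ → P_1 → P_0` of finitely generated graded projective modules, exact
except possibly at `P_0`: a minimal graded projective resolution without its augmentation. -/
structure MinCx (𝒜 : GradedAlg F) where
  P : ℕ → 𝒜.GMod
  d : ∀ n : ℕ, GHom (P (n + 1)) (P n)
  fg : ∀ n, Module.Finite 𝒜.A (P n).M
  projective : ∀ n, Module.Projective 𝒜.A (P n).M
  exact : ∀ n, LinearMap.range (d (n + 1)).lin = LinearMap.ker (d n).lin
  minimal : ∀ n, LinearMap.range (d n).lin ≤ 𝒜.jideal • (⊤ : Submodule 𝒜.A (P n).M)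

/-- The minimal complex underlying a minimal graded projective resolution. -/
@[reducible] def MinRes.toMinCx {M : 𝒜.GMod} (R : MinRes M) : MinCx 𝒜 :=
  { R with }

namespace MinCx

variable (C : MinCx 𝒜)

/-- The `n`-th term of `C` is generated in degree `δ n`, for all `n`. -/
def GenIn (δ : ℕ → ℤ) : Prop := ∀ n, (C.P n).GenInDeg (δ n)

/-- The map `ε` exhibits `C` as a resolution of `V`. -/
structure IsAugmentation {V : Type} [AddCommGroup V] [Module 𝒜.A V]
    (ε : (C.P 0).M →ₗ[𝒜.A] V) : Prop where
  surjective : Function.Surjective ε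
  exact : LinearMap.range (C.d 0).lin = LinearMap.ker ε

variable {C} in
theorem IsAugmentation.apply_d {V : Type} [AddCommGroup V] [Module 𝒜.A V]
    {ε : (C.P 0).M →ₗ[𝒜.A] V} (hε : C.IsAugmentation ε) (x : (C.P 1).M) :
    ε ((C.d 0).lin x) = 0 :=
  LinearMap.mem_ker.1 (hε.exact.le ⟨x, rfl⟩)

theorem d_comp_d (n : ℕ) : (C.d n).lin ∘ₗ (C.d (n + 1)).lin = 0 :=
  LinearMap.range_le_ker_iff.1 (C.exact n).le

theorem d_d (n : ℕ) (x : (C.P (n + 2)).M) : (C.d n).lin ((C.d (n + 1)).lin x) = 0 :=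
  LinearMap.congr_fun (C.d_comp_d n) x

theorem exists_d_eq {n : ℕ} {x : (C.P (n + 1)).M} (hx : (C.d n).lin x = 0) :
    ∃ y, (C.d (n + 1)).lin y = x := by
  have hmem : x ∈ LinearMap.range (C.d (n + 1)).lin := by rwa [C.exact]
  exact hmem

theorem comp_d_eq_zero {V : Type} [AddCommGroup V] [Module 𝒜.A V] (hV : 𝒜.KilledByJ V) {n : ℕ}
    (f : (C.P n).M →ₗ[𝒜.A] V) : f ∘ₗ (C.d n).lin = 0 :=
  LinearMap.ext fun x => hV.map_eq_zero f (C.minimal n ⟨x, rfl⟩)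

end MinCx

theorem MinRes.isAugmentation {M : 𝒜.GMod} (R : MinRes M) :
    R.toMinCx.IsAugmentation R.aug.lin :=
  ⟨R.aug_surj, R.exact_aug⟩

/-- A chain map `C_{n+j} → D_n` that need not respect the gradings of the terms. As in `ChainLift`,
the component `C_m → D_n` takes a proof of `m = n + j`, so that no transport is needed to compose
two of them. -/
structure ShiftMap (C D : MinCx 𝒜) (j : ℕ) where
  f : ∀ m n : ℕ, m = n + j → ((C.P m).M →ₗ[𝒜.A] (D.P n).M)
  comm : ∀ (m n : ℕ) (h : m = n + j) (h' : m + 1 = n + 1 + j),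
    (D.d n).lin ∘ₗ f (m + 1) (n + 1) h' = f m n h ∘ₗ (C.d m).lin

namespace ShiftMap

variable {C D E : MinCx 𝒜}

/-- The shift map with the given components. -/
def ofSeq {j : ℕ} (l : ∀ n, (C.P (j + n)).M →ₗ[𝒜.A] (D.P n).M)
    (hl : ∀ n, (D.d n).lin ∘ₗ l (n + 1) = l n ∘ₗ (C.d (j + n)).lin) : ShiftMap C D j where
  f _ n h := (h.trans (add_comm n j)).symm ▸ l n
  comm m n h _ := by
    obtain rfl : m = j + n := by omega
    exact hl n

/-- The identity, as a chain map of shift zero. -/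
def id (C : MinCx 𝒜) : ShiftMap C C 0 where
  f _ _ h := h ▸ LinearMap.id
  comm m n h _ := by
    obtain rfl : m = n := h
    rfl

/-- The composition of two shift maps. -/
def comp {i j : ℕ} (b : ShiftMap D E i) (a : ShiftMap C D j) : ShiftMap C E (i + j) where
  f m n h := b.f (n + i) n rfl ∘ₗ a.f m (n + i) (by omega)
  comm m n h h' := by
    have hmid : ∀ (l : ℕ) (hl : l = n + 1 + i) (hl' : m + 1 = l + j),
        b.f (n + 1 + i) (n + 1) rfl ∘ₗ a.f (m + 1) (n + 1 + i) (by omega) =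
          b.f l (n + 1) hl ∘ₗ a.f (m + 1) l hl' := by
      rintro _ rfl _
      rfl
    rw [hmid (n + i + 1) (by omega) (by omega), ← LinearMap.comp_assoc, b.comm _ _ rfl,
      LinearMap.comp_assoc, a.comm m (n + i) (by omega), LinearMap.comp_assoc]

/-- The sum of two shift maps. -/
def add {j : ℕ} (a b : ShiftMap C D j) : ShiftMap C D j where
  f m n h := a.f m n h + b.f m n h
  comm m n h h' := by
    rw [LinearMap.comp_add, LinearMap.add_comp, a.comm m n h, b.comm m n h]

/-- The multiple of a shift map by an element of the ground field. -/
def smul {j : ℕ} (t : F) (a : ShiftMap C D j) : ShiftMap C D j where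
  f m n h := t • a.f m n h
  comm m n h h' := by
    rw [comp_smul_of_field, LinearMap.smul_comp, a.comm m n h]

/-- The difference of two shift maps. -/
def sub {j : ℕ} (a b : ShiftMap C D j) : ShiftMap C D j where
  f m n h := a.f m n h - b.f m n h
  comm m n h h' := by
    rw [LinearMap.comp_sub, LinearMap.sub_comp, a.comm m n h, b.comm m n h]

variable {V W : Type} [AddCommGroup V] [Module 𝒜.A V] [AddCommGroup W] [Module 𝒜.A W]
  {ε : (D.P 0).M →ₗ[𝒜.A] V}

theorem exists_lift (hε : D.IsAugmentation ε) (j : ℕ) (g : (C.P j).M →ₗ[𝒜.A] V)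
    (hg : g ∘ₗ (C.d j).lin = 0) :
    ∃ L : ShiftMap C D j, ε ∘ₗ L.f j 0 (zero_add j).symm = g := by
  have := C.projective
  obtain ⟨l₀, hl₀⟩ := exists_comp_eq_of_range_le g ε
    (LinearMap.range_eq_top.2 hε.surjective ▸ le_top)
  obtain ⟨l₁, hl₁⟩ := exists_comp_eq_of_range_le (l₀ ∘ₗ (C.d j).lin) (D.d 0).lin (by
    rw [hε.exact, LinearMap.range_le_ker_iff, ← LinearMap.comp_assoc, hl₀, hg])
  obtain ⟨l, rfl, hl⟩ := exists_seq_of_step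
    (α := fun n => (C.P (j + n)).M →ₗ[𝒜.A] (D.P n).M)
    (fun n u v => (D.d n).lin ∘ₗ v = u ∘ₗ (C.d (j + n)).lin) hl₁
    (fun n u v huv => exists_comp_eq_of_range_le (v ∘ₗ (C.d (j + (n + 1))).lin) _ (by
      rw [D.exact, LinearMap.range_le_ker_iff, ← LinearMap.comp_assoc, huv, LinearMap.comp_assoc]
      exact (congrArg (u ∘ₗ ·) (C.d_comp_d (j + n))).trans (LinearMap.comp_zero u)))
  exact ⟨ofSeq l hl, hl₀⟩

theorem exists_homotopy (hε : D.IsAugmentation ε) {j : ℕ} (K : ShiftMap C D j)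
    (hK : ε ∘ₗ K.f j 0 (zero_add j).symm = 0) (n m : ℕ) (h : m = n + j) :
    ∃ w : (C.P m).M →ₗ[𝒜.A] (D.P (n + 1)).M,
      (K.f m n h - (D.d n).lin ∘ₗ w) ∘ₗ (C.d m).lin = 0 ∧
      LinearMap.range (K.f m n h - (D.d n).lin ∘ₗ w) ≤
        𝒜.jideal • (⊤ : Submodule 𝒜.A (D.P n).M) := by
  have := C.projective
  induction n generalizing m with
  | zero =>
    obtain rfl : m = j := by omega
    obtain ⟨w, hw⟩ := exists_comp_eq_of_range_le (K.f m 0 h) (D.d 0).lin (by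
      rwa [hε.exact, LinearMap.range_le_ker_iff])
    refine ⟨w, ?_⟩
    rw [hw, sub_self, LinearMap.zero_comp, LinearMap.range_zero]
    exact ⟨rfl, bot_le⟩
  | succ n ih =>
    obtain ⟨m, rfl⟩ : ∃ m', m = m' + 1 := ⟨n + j, by omega⟩
    obtain ⟨w, hw, -⟩ := ih m (by omega)
    obtain ⟨w', hw'⟩ := exists_comp_eq_of_range_le
      (K.f (m + 1) (n + 1) h - w ∘ₗ (C.d m).lin) (D.d (n + 1)).lin (by
        rw [D.exact, LinearMap.range_le_ker_iff, LinearMap.comp_sub, K.comm m n (by omega), ← hw,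
          LinearMap.sub_comp, LinearMap.comp_assoc])
    refine ⟨w', ?_⟩
    rw [hw', sub_sub_cancel, LinearMap.comp_assoc, C.d_comp_d, LinearMap.comp_zero]
    refine ⟨rfl, ?_⟩
    rintro _ ⟨x, rfl⟩
    exact map_mem_jideal_smul_top w (C.minimal m ⟨x, rfl⟩)

theorem comp_eq_zero (hW : 𝒜.KilledByJ W) (hε : D.IsAugmentation ε) {j : ℕ} (K : ShiftMap C D j)
    (hK : ε ∘ₗ K.f j 0 (zero_add j).symm = 0) (m n : ℕ) (h : m = n + j)
    (f : (D.P n).M →ₗ[𝒜.A] W) : f ∘ₗ K.f m n h = 0 := by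
  obtain ⟨w, -, hw⟩ := exists_homotopy hε K hK n m h
  have hsub : f ∘ₗ (K.f m n h - (D.d n).lin ∘ₗ w) = 0 :=
    LinearMap.ext fun x => hW.map_eq_zero f (hw ⟨x, rfl⟩)
  rwa [LinearMap.comp_sub, ← LinearMap.comp_assoc, D.comp_d_eq_zero hW, LinearMap.zero_comp,
    sub_zero] at hsub

theorem comp_eq_comp (hW : 𝒜.KilledByJ W) (hε : D.IsAugmentation ε) {j : ℕ}
    (L L' : ShiftMap C D j)
    (h₀ : ε ∘ₗ L.f j 0 (zero_add j).symm = ε ∘ₗ L'.f j 0 (zero_add j).symm)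
    (m n : ℕ) (h : m = n + j) (f : (D.P n).M →ₗ[𝒜.A] W) : f ∘ₗ L.f m n h = f ∘ₗ L'.f m n h := by
  refine sub_eq_zero.1 (Eq.trans (LinearMap.comp_sub _ _ _).symm ?_)
  exact comp_eq_zero hW hε (L.sub L')
    ((LinearMap.comp_sub _ _ _).trans (sub_eq_zero.2 h₀)) m n h f

end ShiftMap

theorem MinRes.exists_comparison {M : 𝒜.GMod} (R R' : MinRes M) :
    ∃ (u : ShiftMap R.toMinCx R'.toMinCx 0) (v : ShiftMap R'.toMinCx R.toMinCx 0),
      ∀ {V : Type} [AddCommGroup V] [Module 𝒜.A V], 𝒜.KilledByJ V → ∀ n,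
        (∀ f : (R.P n).M →ₗ[𝒜.A] V, (f ∘ₗ v.f n n rfl) ∘ₗ u.f n n rfl = f) ∧
        ∀ f : (R'.P n).M →ₗ[𝒜.A] V, (f ∘ₗ u.f n n rfl) ∘ₗ v.f n n rfl = f := by
  obtain ⟨u, hu⟩ := ShiftMap.exists_lift (C := R.toMinCx) R'.isAugmentation 0 R.aug.lin
    (LinearMap.ext R.isAugmentation.apply_d)
  obtain ⟨v, hv⟩ := ShiftMap.exists_lift (C := R'.toMinCx) R.isAugmentation 0 R'.aug.lin
    (LinearMap.ext R'.isAugmentation.apply_d)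
  refine ⟨u, v, fun hV n => ⟨fun f => ?_, fun f => ?_⟩⟩
  · refine ShiftMap.comp_eq_comp hV R.isAugmentation (v.comp u) (ShiftMap.id _) ?_ n n rfl f
    exact (congrArg (· ∘ₗ u.f 0 0 rfl) hv).trans hu
  · refine ShiftMap.comp_eq_comp hV R'.isAugmentation (u.comp v) (ShiftMap.id _) ?_ n n rfl f
    exact (congrArg (· ∘ₗ v.f 0 0 rfl) hu).trans hv

end Complexes

section ChainMaps

variable {F : Type} [Field F] {𝒜 : GradedAlg F} {C D E : MinCx 𝒜} {δ : ℕ → ℤ}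

theorem projective_pi {A M ι : Type} [Ring A] [AddCommGroup M] [Module A M] [Finite ι]
    [Module.Projective A M] : Module.Projective A (ι → M) := by
  classical
  have := Fintype.ofFinite ι
  exact Module.Projective.of_equiv
    (DFinsupp.linearEquivFunOnFintype (R := A) (M := fun _ : ι => M))

/-- A chain map between minimal complexes, with components homogeneous of degree zero. -/
structure ChainMap (C D : MinCx 𝒜) where
  f : ∀ n, GHom (C.P n) (D.P n)
  comm : ∀ n, (D.d n).lin ∘ₗ (f (n + 1)).lin = (f n).lin ∘ₗ (C.d n).lin

namespace ChainMap

theorem comm_apply (a : ChainMap C D) (n : ℕ) (x : (C.P (n + 1)).M) :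
    (D.d n).lin ((a.f (n + 1)).lin x) = (a.f n).lin ((C.d n).lin x) :=
  LinearMap.congr_fun (a.comm n) x

/-- The composition of two chain maps. -/
def comp (b : ChainMap D E) (a : ChainMap C D) : ChainMap C E where
  f n := (b.f n).comp (a.f n)
  comm n := LinearMap.ext fun x => (b.comm_apply n _).trans (congrArg _ (a.comm_apply n x))

/-- A chain map, with the gradings forgotten. -/
def toShiftMap (a : ChainMap C D) : ShiftMap C D 0 where
  f _ n h := h ▸ (a.f n).lin
  comm m n h _ := by
    obtain rfl : m = n := h
    exact a.comm m

variable {V : Type} [AddCommGroup V] [Module 𝒜.A V] {ε : (D.P 0).M →ₗ[𝒜.A] V}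

theorem exists_lift (hV : 𝒜.KilledByJ V) (hε : D.IsAugmentation ε) (hC : C.GenIn δ)
    (hD : D.GenIn δ) (g : (C.P 0).M →ₗ[𝒜.A] V) :
    ∃ a : ChainMap C D, ε ∘ₗ (a.f 0).lin = g := by
  obtain ⟨L, hL⟩ := ShiftMap.exists_lift hε 0 g (C.comp_d_eq_zero hV g)
  refine ⟨⟨fun n => GHom.degZero (L.f n n rfl), fun n => ?_⟩, ?_⟩
  · rw [GHom.comp_degZero, L.comm n n rfl, GHom.degZero_comp]
  · refine LinearMap.ext_on (hC 0) fun x hx => ?_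
    rw [← hL, LinearMap.comp_apply, LinearMap.comp_apply, GHom.degZero_apply_of_mem _ hx,
      ← sub_eq_zero, ← neg_sub, ← map_sub, neg_eq_zero]
    exact hV.map_eq_zero ε ((hD 0).sub_proj_mem _)

theorem eq_of_augmentation (hε : D.IsAugmentation ε) (hC : C.GenIn δ) (hD : D.GenIn δ)
    (a b : ChainMap C D) (h₀ : ∀ x, ε ((a.f 0).lin x) = ε ((b.f 0).lin x)) (n : ℕ) :
    a.f n = b.f n := by
  induction n with
  | zero =>
    refine (hC 0).eq_of_sub_mem (hD 0) _ _ fun x => D.minimal 0 ?_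
    rw [hε.exact, LinearMap.mem_ker, map_sub, h₀, sub_self]
  | succ n ih =>
    refine (hC _).eq_of_sub_mem (hD _) _ _ fun x => D.minimal _ ?_
    rw [D.exact, LinearMap.mem_ker, map_sub, a.comm_apply, b.comm_apply, ih, sub_self]

end ChainMap

namespace MinCx

/-- The complex `C^r`. -/
@[reducible] def pow (C : MinCx 𝒜) (r : ℕ) : MinCx 𝒜 where
  P n := (C.P n).pow r
  d n := (C.d n).pow r
  fg n := have := C.fg n; Module.Finite.pi
  projective n := have := C.projective n; projective_pi
  exact n := by
    ext x
    refine ⟨?_, fun hx => ?_⟩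
    · rintro ⟨y, rfl⟩
      exact funext fun l => C.d_d n (y l)
    · choose y hy using fun l => C.exists_d_eq (congrFun hx l)
      exact ⟨y, funext hy⟩
  minimal n := by
    rintro _ ⟨x, rfl⟩
    rw [← Finset.univ_sum_single (((C.d n).pow r).lin x)]
    exact sum_mem fun l _ => map_mem_jideal_smul_top
      (LinearMap.single 𝒜.A (fun _ : Fin r => (C.P n).M) l) (C.minimal n ⟨x l, rfl⟩)

theorem GenIn.pow (hC : C.GenIn δ) (r : ℕ) : (C.pow r).GenIn δ := fun n => (hC n).pow r

theorem IsAugmentation.pow {V : Type} [AddCommGroup V] [Module 𝒜.A V]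
    {ε : (C.P 0).M →ₗ[𝒜.A] V} (hε : C.IsAugmentation ε) (r : ℕ) :
    (C.pow r).IsAugmentation (ε.compLeft (Fin r)) where
  surjective x := by
    choose y hy using fun l => hε.surjective (x l)
    exact ⟨y, funext hy⟩
  exact := by
    ext x
    refine ⟨?_, fun hx => ?_⟩
    · rintro ⟨y, rfl⟩
      exact funext fun l => hε.apply_d (y l)
    · have hmem : ∀ l, x l ∈ LinearMap.range (C.d 0).lin := fun l => hε.exact ▸ congrFun hx l
      choose y hy using hmem
      exact ⟨y, funext hy⟩

/-- The inclusion of the `i`-th factor into `C^r`. -/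
def single (C : MinCx 𝒜) {r : ℕ} (i : Fin r) : ChainMap C (C.pow r) where
  f n := GHom.single (C.P n) i
  comm n := LinearMap.ext fun x =>
    funext fun l => Pi.apply_single (fun _ => (C.d n).lin) (fun _ => map_zero _) i x l

/-- The projection of `C^r` onto the `i`-th factor. -/
def eval (C : MinCx 𝒜) {r : ℕ} (i : Fin r) : ChainMap (C.pow r) C where
  f n := GHom.eval (C.P n) i
  comm _ := rfl

/-- The truncation of `C` at `c`, with the internal gradings shifted by `s`. -/
@[reducible] def trunc (C : MinCx 𝒜) (c : ℕ) (s : ℤ) : MinCx 𝒜 where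
  P n := (C.P (c + n)).shift s
  d n := (C.d (c + n)).shift s
  fg n := C.fg (c + n)
  projective n := C.projective (c + n)
  exact n := C.exact (c + n)
  minimal n := C.minimal (c + n)

theorem GenIn.trunc {c : ℕ} {s : ℤ} (hC : C.GenIn δ) (hδ : ∀ n, δ (c + n) = δ n + s) :
    (C.trunc c s).GenIn δ :=
  fun n => (hC (c + n)).shift (hδ n).symm

/-- The image of `C` under idempotent endomorphisms of its terms, with the differentials induced by
those of `C`. The idempotents need only commute with the differentials up to the kernels. -/
@[reducible] def image (C : MinCx 𝒜) (e : ∀ n, GHom (C.P n) (C.P n))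
    (he : ∀ n, (e n).lin ∘ₗ (e n).lin = (e n).lin)
    (hd : ∀ n x, (e n).lin ((C.d n).lin ((e (n + 1)).lin x)) = (e n).lin ((C.d n).lin x))
    (hexact : ∀ n x, (e n).lin ((C.d n).lin x) = 0 →
      ∃ y, (e (n + 1)).lin ((C.d (n + 1)).lin y) = (e (n + 1)).lin x) : MinCx 𝒜 where
  P n := GMod.range (e n)
  d n := (e n).rangeRestrict.comp ((C.d n).comp (e (n + 1)).rangeSubtype)
  fg n := have := C.fg n; Module.Finite.range (e n).lin
  projective n := have := C.projective n
    Module.Projective.of_split _ _ ((e n).rangeRestrict_comp_rangeSubtype (he n))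
  exact n := by
    ext ⟨_, x, rfl⟩
    refine ⟨?_, fun hx => ?_⟩
    · rintro ⟨⟨_, y, rfl⟩, hy⟩
      rw [← hy]
      exact Subtype.ext ((hd n _).trans ((congrArg _ (C.d_d n _)).trans (map_zero _)))
    · obtain ⟨y, hy⟩ := hexact n x ((hd n x).symm.trans (congrArg Subtype.val hx))
      exact ⟨⟨_, y, rfl⟩, Subtype.ext ((hd _ y).trans hy)⟩
  minimal n := by
    rintro _ ⟨x, rfl⟩
    exact map_mem_jideal_smul_top (e n).rangeRestrict.lin (C.minimal n ⟨_, rfl⟩)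

theorem GenIn.image (hC : C.GenIn δ) {e : ∀ n, GHom (C.P n) (C.P n)} (he hd hexact) :
    (C.image e he hd hexact).GenIn δ :=
  fun n => (hC n).of_surjective (e n).rangeRestrict (e n).lin.surjective_rangeRestrict

end MinCx

end ChainMaps

section Covers

variable {F : Type} [Field F] {𝒜 : GradedAlg F} {T : 𝒜.GMod} {C D Q : MinCx 𝒜} {δ : ℕ → ℤ}

theorem IsTrivialGMod.killedByJ (hT : IsTrivialGMod T) : 𝒜.KilledByJ T.M := by
  obtain ⟨-, ⟨e⟩⟩ := hT
  rintro v ⟨a, ha⟩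
  refine e.injective (Eq.trans (map_smul e a v) ?_)
  obtain ⟨x, hx⟩ := Submodule.Quotient.mk_surjective _ (e v)
  rw [map_zero, ← hx]
  exact (Submodule.Quotient.mk_eq_zero _).2 (Ideal.mul_mem_right x _ ha)

theorem KilledByJ.pow {V : Type} [AddCommGroup V] [Module 𝒜.A V] (hV : 𝒜.KilledByJ V) (r : ℕ) :
    𝒜.KilledByJ (Fin r → V) :=
  fun v a => funext fun l => @hV (v l) a

theorem KilledByJ.exists_retract_pow (hs : IsSemisimpleRing (𝒜.grading 0))
    (hT : IsTrivialGMod T) {V : Type} [AddCommGroup V] [Module 𝒜.A V] [Module.Finite 𝒜.A V]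
    (hV : 𝒜.KilledByJ V) :
    ∃ (r : ℕ) (ι : V →ₗ[𝒜.A] (Fin r → T.M)) (π : (Fin r → T.M) →ₗ[𝒜.A] V),
      π ∘ₗ ι = LinearMap.id := by
  have hTJ := hT.killedByJ
  obtain ⟨-, ⟨e⟩⟩ := hT
  obtain ⟨r, v, hv⟩ := Module.Finite.exists_fin (R := 𝒜.A) (M := V)
  let orbit (w : V) : (𝒜.A ⧸ 𝒜.jideal) →ₗ[𝒜.A] V :=
    Submodule.liftQ 𝒜.jideal (LinearMap.toSpanSingleton 𝒜.A V w) fun a ha => @hV w ⟨a, ha⟩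
  let π : (Fin r → T.M) →ₗ[𝒜.A] V := LinearMap.lsum 𝒜.A _ ℕ fun i => orbit (v i) ∘ₗ e.toLinearMap
  have hπ : Function.Surjective π := by
    intro y
    obtain ⟨a, rfl⟩ := (Submodule.mem_span_range_iff_exists_fun 𝒜.A).1
      (hv.symm ▸ Submodule.mem_top : y ∈ Submodule.span 𝒜.A (Set.range v))
    refine ⟨fun i => e.symm (Submodule.Quotient.mk (a i)), ?_⟩
    simp only [π, LinearMap.lsum_apply, LinearMap.sum_apply, LinearMap.comp_apply,
      LinearMap.proj_apply, LinearEquiv.coe_coe, LinearEquiv.apply_symm_apply]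
    rfl
  have := (hTJ.pow r).isSemisimpleModule hs
  obtain ⟨ι, hι⟩ := IsSemisimpleModule.lifting_property π hπ LinearMap.id
  exact ⟨r, ι, π, hι⟩

namespace ChainMap

variable (e : ChainMap D D) (he : ∀ n x, (e.f n).lin ((e.f n).lin x) = (e.f n).lin x)

/-- The image of an idempotent chain map. -/
@[reducible] def image : MinCx 𝒜 :=
  D.image e.f (fun n => LinearMap.ext (he n)) (fun n x => by rw [e.comm_apply, he])
    (fun n x hx => by
      rw [← e.comm_apply] at hx
      obtain ⟨y, hy⟩ := D.exists_d_eq hx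
      exact ⟨y, by rw [hy, he]⟩)

/-- The inclusion of the image of an idempotent chain map. -/
def imageSubtype : ChainMap (e.image he) D where
  f n := (e.f n).rangeSubtype
  comm n := by
    ext ⟨_, x, rfl⟩
    exact (e.comm_apply n x).trans ((he n _).symm.trans (congrArg _ (e.comm_apply n x).symm))

/-- An idempotent chain map, corestricted to its image. -/
def imageRestrict : ChainMap D (e.image he) where
  f n := (e.f n).rangeRestrict
  comm n := LinearMap.ext fun x =>
    Subtype.ext ((congrArg _ (e.comm_apply n x)).trans (he n _))

theorem imageRestrict_imageSubtype (n : ℕ) (x : ((e.image he).P n).M) :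
    ((e.imageRestrict he).f n).lin (((e.imageSubtype he).f n).lin x) = x :=
  LinearMap.congr_fun ((e.f n).rangeRestrict_comp_rangeSubtype (LinearMap.ext (he n))) x

end ChainMap

namespace MinCx

variable {U V : Type} [AddCommGroup U] [Module 𝒜.A U] [AddCommGroup V] [Module 𝒜.A V]
  {ε : (D.P 0).M →ₗ[𝒜.A] U}

theorem IsAugmentation.of_retract (hε : D.IsAugmentation ε) {p : ChainMap D Q} {i : ChainMap Q D}
    (hpi : ∀ n x, (p.f n).lin ((i.f n).lin x) = x) {ι : V →ₗ[𝒜.A] U} {π : U →ₗ[𝒜.A] V}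
    (hπι : ∀ v, π (ι v) = v) {εQ : (Q.P 0).M →ₗ[𝒜.A] V}
    (hi : ∀ x, ι (εQ x) = ε ((i.f 0).lin x)) (hp : ∀ x, εQ ((p.f 0).lin x) = π (ε x)) :
    Q.IsAugmentation εQ where
  surjective v := by
    obtain ⟨w, hw⟩ := hε.surjective (ι v)
    exact ⟨(p.f 0).lin w, by rw [hp, hw, hπι]⟩
  exact := by
    ext x
    refine ⟨?_, fun hx => ?_⟩
    · rintro ⟨y, rfl⟩
      rw [LinearMap.mem_ker, ← hπι (εQ _), hi, ← i.comm_apply, hε.apply_d,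
        map_zero]
    · have hix : (i.f 0).lin x ∈ LinearMap.range (D.d 0).lin := by
        rw [hε.exact, LinearMap.mem_ker, ← hi, LinearMap.mem_ker.1 hx, map_zero]
      obtain ⟨w, hw⟩ := hix
      exact ⟨(p.f 1).lin w, by rw [p.comm_apply, hw, hpi]⟩

theorem exists_resolution_of_retract (hU : 𝒜.KilledByJ U) (hD : D.GenIn δ)
    (hε : D.IsAugmentation ε) (ι : V →ₗ[𝒜.A] U) (π : U →ₗ[𝒜.A] V) (hπι : ∀ v, π (ι v) = v) :
    ∃ (Q : MinCx 𝒜) (εQ : (Q.P 0).M →ₗ[𝒜.A] V) (p : ChainMap D Q) (i : ChainMap Q D),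
      Q.GenIn δ ∧ Q.IsAugmentation εQ ∧ ∀ n x, (p.f n).lin ((i.f n).lin x) = x := by
  obtain ⟨e, he₀⟩ := ChainMap.exists_lift hU hε hD hD ((ι ∘ₗ π) ∘ₗ ε)
  have hεe (x : (D.P 0).M) : ε ((e.f 0).lin x) = ι (π (ε x)) := LinearMap.congr_fun he₀ x
  have he (n : ℕ) (x : (D.P n).M) : (e.f n).lin ((e.f n).lin x) = (e.f n).lin x :=
    congrArg (GHom.lin · x) <| ChainMap.eq_of_augmentation hε hD hD (e.comp e) e
      (fun x => (hεe _).trans (by rw [hεe, hπι])) n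
  let i := e.imageSubtype he
  let p := e.imageRestrict he
  refine ⟨e.image he, π ∘ₗ ε ∘ₗ (i.f 0).lin, p, i, hD.image _ _ _,
    hε.of_retract (e.imageRestrict_imageSubtype he) hπι ?_ fun x => ?_,
    e.imageRestrict_imageSubtype he⟩
  · rintro ⟨_, x, rfl⟩
    exact (hεe _).symm.trans (congrArg ε (he 0 x))
  · exact (congrArg π (hεe x)).trans (hπι _)

end MinCx

namespace ChainMap

theorem exists_retraction (hs : IsSemisimpleRing (𝒜.grading 0)) (hC : C.GenIn δ) (hQ : Q.GenIn δ)
    (α : ChainMap C Q)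
    (h₀ : LinearMap.ker (α.f 0).lin ≤ 𝒜.jideal • (⊤ : Submodule 𝒜.A (C.P 0).M)) (n : ℕ) :
    ∃ ρ : GHom (Q.P n) (C.P n), ρ.lin ∘ₗ (α.f n).lin = LinearMap.id := by
  induction n with
  | zero => exact GHom.exists_retraction hs (hC 0) (hQ 0) (Q.projective 0) _ h₀
  | succ n ih =>
    obtain ⟨ρ, hρ⟩ := ih
    refine GHom.exists_retraction hs (hC _) (hQ _) (Q.projective _) _ fun x hx => ?_
    have hdx : (C.d n).lin x = 0 := by
      rw [← LinearMap.id_apply (R := 𝒜.A) ((C.d n).lin x), ← hρ, LinearMap.comp_apply,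
        ← α.comm_apply, LinearMap.mem_ker.1 hx, map_zero, map_zero]
    obtain ⟨y, rfl⟩ := C.exists_d_eq hdx
    exact C.minimal _ ⟨y, rfl⟩

section Cokernel

variable (α : ChainMap C Q) (ρ : ∀ n, GHom (Q.P n) (C.P n))

/-- The projection `1 - αρ` of `Q_n` along the image of `α`, for a retraction `ρ` of `α`. -/
def complProj (n : ℕ) : GHom (Q.P n) (Q.P n) where
  lin := LinearMap.id - (α.f n).lin ∘ₗ (ρ n).lin
  grad j x hx := sub_mem hx ((α.f n).grad j _ ((ρ n).grad j x hx))

theorem complProj_apply (n : ℕ) (x : (Q.P n).M) :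
    (α.complProj ρ n).lin x = x - (α.f n).lin ((ρ n).lin x) := rfl

variable {ρ} (hρ : ∀ n x, (ρ n).lin ((α.f n).lin x) = x)

include hρ

theorem complProj_comp (n : ℕ) (x : (C.P n).M) :
    (α.complProj ρ n).lin ((α.f n).lin x) = 0 := by
  rw [complProj_apply, hρ, sub_self]

theorem complProj_complProj (n : ℕ) (x : (Q.P n).M) :
    (α.complProj ρ n).lin ((α.complProj ρ n).lin x) = (α.complProj ρ n).lin x := by
  rw [α.complProj_apply ρ n x, map_sub, α.complProj_comp hρ, sub_zero, complProj_apply]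

theorem complProj_d_complProj (n : ℕ) (x : (Q.P (n + 1)).M) :
    (α.complProj ρ n).lin ((Q.d n).lin ((α.complProj ρ (n + 1)).lin x)) =
      (α.complProj ρ n).lin ((Q.d n).lin x) := by
  rw [α.complProj_apply ρ (n + 1), map_sub, map_sub, α.comm_apply, α.complProj_comp hρ, sub_zero]

theorem exists_complProj_d_eq {n : ℕ} (hn : 1 ≤ n) (x : (Q.P (n + 1)).M)
    (hx : (α.complProj ρ n).lin ((Q.d n).lin x) = 0) :
    ∃ y, (α.complProj ρ (n + 1)).lin ((Q.d (n + 1)).lin y) =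
      (α.complProj ρ (n + 1)).lin x := by
  obtain ⟨n, rfl⟩ := Nat.exists_eq_add_of_le' hn
  rw [complProj_apply, sub_eq_zero] at hx
  have hdρ : (C.d n).lin ((ρ (n + 1)).lin ((Q.d (n + 1)).lin x)) = 0 := by
    rw [← hρ n ((C.d n).lin _), ← α.comm_apply, ← hx, Q.d_d, map_zero]
  obtain ⟨x', hx'⟩ := C.exists_d_eq hdρ
  have hdx : (Q.d (n + 1)).lin (x - (α.f (n + 2)).lin x') = 0 := by
    rw [map_sub, α.comm_apply, hx', ← hx, sub_self]
  obtain ⟨y, hy⟩ := Q.exists_d_eq hdx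
  exact ⟨y, by rw [hy, map_sub, α.complProj_comp hρ, sub_zero]⟩

end Cokernel

end ChainMap

namespace MinCx

theorem sum_single_eval (D : MinCx 𝒜) (r n : ℕ) (x : ((D.pow r).P n).M) :
    ∑ l, ((D.single l).f n).lin (((D.eval l).f n).lin x) = x :=
  Finset.univ_sum_single x

/-- On cochains with values in `T`, the complex `Q` is a direct summand of a power of `R`. -/
def IsRetractPow (T : 𝒜.GMod) (R Q : MinCx 𝒜) : Prop :=
  ∃ (r : ℕ) (u : Fin r → ShiftMap R Q 0) (v : Fin r → ShiftMap Q R 0),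
    ∀ (n : ℕ) (g : (Q.P n).M →ₗ[𝒜.A] T.M),
      ∑ l, (g ∘ₗ (u l).f n n rfl) ∘ₗ (v l).f n n rfl = g

theorem isRetractPow (hT : 𝒜.KilledByJ T.M) (R D : MinRes T) {r : ℕ}
    (p : ChainMap (D.toMinCx.pow r) Q) (i : ChainMap Q (D.toMinCx.pow r))
    (hpi : ∀ n x, (p.f n).lin ((i.f n).lin x) = x) : IsRetractPow T R.toMinCx Q := by
  obtain ⟨u, v, huv⟩ := D.exists_comparison R
  refine ⟨r, fun l => (p.comp (D.toMinCx.single l)).toShiftMap.comp v,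
    fun l => u.comp ((D.toMinCx.eval l).comp i).toShiftMap, fun n g => LinearMap.ext fun x => ?_⟩
  have hsummand (l : Fin r) (y : (D.P n).M) :=
    LinearMap.congr_fun ((huv hT n).1 (g ∘ₗ (p.f n).lin ∘ₗ ((D.toMinCx.single l).f n).lin)) y
  rw [LinearMap.sum_apply]
  refine (Finset.sum_congr rfl fun l _ => hsummand l (((D.toMinCx.eval l).f n).lin
    ((i.f n).lin x))).trans ?_
  simp only [LinearMap.comp_apply]
  rw [← map_sum, ← map_sum, sum_single_eval, hpi]

/-- One step of the resolution of the module of cochains of `C` over the Ext algebra computed from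
`R`. On cochains with values in `T`, the split embedding `α` induces a projective cover, whose
kernel consists of the cochains of `S`, embedded by `β`. -/
structure Cover (T : 𝒜.GMod) (R : MinCx 𝒜) (δ : ℕ → ℤ) (c : ℕ) (C : MinCx 𝒜) where
  Q : MinCx 𝒜
  S : MinCx 𝒜
  genIn : S.GenIn δ
  isRetractPow : IsRetractPow T R Q
  α : ChainMap C Q
  exists_retraction : ∀ n, ∃ ρ : (Q.P n).M →ₗ[𝒜.A] (C.P n).M, ρ ∘ₗ (α.f n).lin = LinearMap.id
  sup_eq_top : LinearMap.range (α.f 0).lin ⊔ 𝒜.jideal • (⊤ : Submodule 𝒜.A (Q.P 0).M) = ⊤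
  β : ShiftMap Q S c
  surjective : ∀ m n h, Function.Surjective (β.f m n h)
  ker_eq : ∀ m n h, LinearMap.ker (β.f m n h) = LinearMap.range (α.f m).lin

end MinCx

namespace ChainMap

section Cokernel

variable (α : ChainMap C Q) {ρ : ∀ n, GHom (Q.P n) (C.P n)}
  (hρ : ∀ n x, (ρ n).lin ((α.f n).lin x) = x) {c : ℕ}

/-- The cokernel of a degreewise split chain map, truncated at `c ≥ 1` and shifted by `s`. It is
realised as the image of the projections `1 - αρ`. -/
@[reducible] def shiftedCokernel (hc : 1 ≤ c) (s : ℤ) : MinCx 𝒜 :=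
  (Q.trunc c s).image (fun n => (α.complProj ρ (c + n)).shift s)
    (fun n => LinearMap.ext (α.complProj_complProj hρ (c + n)))
    (fun n => α.complProj_d_complProj hρ (c + n))
    (fun n => α.exists_complProj_d_eq hρ (hc.trans (Nat.le_add_right c n)))

/-- The projection onto the shifted cokernel. -/
def toShiftedCokernel (hc : 1 ≤ c) (s : ℤ) : ShiftMap Q (α.shiftedCokernel hρ hc s) c :=
  ShiftMap.ofSeq (fun n => ((α.complProj ρ (c + n)).shift s).rangeRestrict.lin)
    (fun n => LinearMap.ext fun x => Subtype.ext (α.complProj_d_complProj hρ (c + n) x))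

theorem toShiftedCokernel_surjective (hc : 1 ≤ c) (s : ℤ) (m n : ℕ) (h : m = n + c) :
    Function.Surjective ((α.toShiftedCokernel hρ hc s).f m n h) := by
  obtain rfl : m = c + n := by omega
  exact ((α.complProj ρ (c + n)).shift s).lin.surjective_rangeRestrict

theorem ker_toShiftedCokernel (hc : 1 ≤ c) (s : ℤ) (m n : ℕ) (h : m = n + c) :
    LinearMap.ker ((α.toShiftedCokernel hρ hc s).f m n h) = LinearMap.range (α.f m).lin := by
  obtain rfl : m = c + n := by omega
  refine le_antisymm (fun x hx => ?_) ?_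
  · exact ⟨_, (sub_eq_zero.1 (congrArg Subtype.val hx)).symm⟩
  · rintro _ ⟨x, rfl⟩
    exact Subtype.ext (α.complProj_comp hρ (c + n) x)

end Cokernel

end ChainMap

theorem MinCx.exists_cover (hs : IsSemisimpleRing (𝒜.grading 0)) (hT : IsTrivialGMod T)
    (R D : MinRes T) (hD : D.toMinCx.GenIn δ) {c : ℕ} {s : ℤ} (hc : 1 ≤ c)
    (hδ : ∀ n, δ (c + n) = δ n + s) (hC : C.GenIn δ) :
    Nonempty (Cover T R.toMinCx δ c C) := by
  have := C.fg 0
  have hV := killedByJ_quotient 𝒜 (C.P 0).M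
  obtain ⟨r, ι, π, hπι⟩ := hV.exists_retract_pow hs hT
  obtain ⟨Q, εQ, p, i, hQ, hε, hpi⟩ := exists_resolution_of_retract (hT.killedByJ.pow r)
    (hD.pow r) (D.isAugmentation.pow r) ι π (LinearMap.congr_fun hπι)
  obtain ⟨α, hα⟩ := ChainMap.exists_lift hV hε hC hQ (Submodule.mkQ _)
  have hker : LinearMap.ker (α.f 0).lin ≤ 𝒜.jideal • (⊤ : Submodule 𝒜.A (C.P 0).M) := by
    conv_rhs => rw [← Submodule.ker_mkQ (𝒜.jideal • (⊤ : Submodule 𝒜.A (C.P 0).M)), ← hα]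
    exact LinearMap.ker_le_ker_comp _ _
  choose ρ hρ using α.exists_retraction hs hC hQ hker
  have hρ' (n : ℕ) (x : (C.P n).M) : (ρ n).lin ((α.f n).lin x) = x := LinearMap.congr_fun (hρ n) x
  refine ⟨⟨Q, α.shiftedCokernel hρ' hc s, (hQ.trunc hδ).image _ _ _,
    isRetractPow hT.killedByJ R D p i hpi, α, fun n => ⟨(ρ n).lin, hρ n⟩, ?_,
    α.toShiftedCokernel hρ' hc s, α.toShiftedCokernel_surjective hρ' hc s,
    α.ker_toShiftedCokernel hρ' hc s⟩⟩
  refine eq_top_iff.2 fun y _ => ?_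
  obtain ⟨x, hx⟩ := Submodule.mkQ_surjective _ (εQ y)
  have hyx : y - (α.f 0).lin x ∈ LinearMap.range (Q.d 0).lin := by
    rw [hε.exact, LinearMap.mem_ker, map_sub, ← hx, ← hα, LinearMap.comp_apply, sub_self]
  rw [← add_sub_cancel ((α.f 0).lin x) y]
  exact Submodule.add_mem_sup ⟨x, rfl⟩ (Q.minimal 0 hyx)

end Covers

section YonedaAlgebra

variable {F : Type} [Field F] {𝒜 : GradedAlg F} {C D : MinCx 𝒜}

/-- A graded module `T` killed by `J` with a minimal resolution, and a number `c`: the data from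
which the algebra `⊕_n Ext^{cn}(T, T)` and its modules `⊕_n Ext^{cn}(M, T)` are built. By
minimality, the differential of every complex of cochains with values in `T` vanishes, so that these
modules consist of cochains. -/
structure ExtDatum (𝒜 : GradedAlg F) where
  T : 𝒜.GMod
  killedByJ : 𝒜.KilledByJ T.M
  res : MinRes T
  c : ℕ

namespace ExtDatum

variable (X : ExtDatum 𝒜)

/-- The minimal complex resolving `T`. -/
abbrev R : MinCx 𝒜 := X.res.toMinCx

/-- The cochains of `C` of cohomological degree `n` with values in `T`. -/
abbrev Cochain (C : MinCx 𝒜) (n : ℕ) := (C.P n).M →ₗ[𝒜.A] X.T.M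

theorem exists_lift {j : ℕ} (g : X.Cochain C j) :
    ∃ L : ShiftMap C X.R j, X.res.aug.lin ∘ₗ L.f j 0 (zero_add j).symm = g :=
  ShiftMap.exists_lift X.res.isAugmentation j g (C.comp_d_eq_zero X.killedByJ g)

/-- A chain map lifting a cochain. -/
def lift {j : ℕ} (g : X.Cochain C j) : ShiftMap C X.R j := (X.exists_lift g).choose

theorem aug_comp_lift {j : ℕ} (g : X.Cochain C j) :
    X.res.aug.lin ∘ₗ (X.lift g).f j 0 (zero_add j).symm = g :=
  (X.exists_lift g).choose_spec

theorem comp_lift_eq {i j k : ℕ} (h : k = i + j) (f : X.Cochain X.R i) {g : X.Cochain C j}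
    (L : ShiftMap C X.R j) (hL : X.res.aug.lin ∘ₗ L.f j 0 (zero_add j).symm = g) :
    f ∘ₗ (X.lift g).f k i h = f ∘ₗ L.f k i h :=
  ShiftMap.comp_eq_comp X.killedByJ X.res.isAugmentation (X.lift g) L
    ((X.aug_comp_lift g).trans hL.symm) k i h f

/-- The Yoneda product of cochains: compose the first with a lift of the second. -/
def yoneda {i j k : ℕ} (h : k = i + j) :
    X.Cochain X.R i →ₗ[F] X.Cochain C j →ₗ[F] X.Cochain C k :=
  LinearMap.mk₂ F (fun f g => f ∘ₗ (X.lift g).f k i h)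
    (fun _ _ _ => LinearMap.add_comp _ _ _) (fun _ _ _ => LinearMap.smul_comp _ _ _)
    (fun f g g' => by
      rw [X.comp_lift_eq h f ((X.lift g).add (X.lift g'))]
      · exact LinearMap.comp_add _ _ _
      · exact (LinearMap.comp_add _ _ _).trans
          (congrArg₂ _ (X.aug_comp_lift g) (X.aug_comp_lift g')))
    (fun t f g => by
      rw [X.comp_lift_eq h f ((X.lift g).smul t)]
      · exact comp_smul_of_field t f _
      · exact (comp_smul_of_field t _ _).trans (congrArg (t • ·) (X.aug_comp_lift g)))

theorem yoneda_apply {i j k : ℕ} (h : k = i + j) (f : X.Cochain X.R i) (g : X.Cochain C j) :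
    X.yoneda h f g = f ∘ₗ (X.lift g).f k i h := rfl

theorem yoneda_comp {i j k s j' k' : ℕ} (h : k = i + j) (f : X.Cochain X.R i)
    (g : X.Cochain D j) (a : ShiftMap C D s) (hj : j' = j + s) (hk : k' = k + s)
    (h' : k' = i + j') :
    X.yoneda h f g ∘ₗ a.f k' k hk = X.yoneda h' f (g ∘ₗ a.f j' j hj) := by
  subst h hj hk
  have hmid : ∀ (m : ℕ) (_ : m = j) (e₁ : m = 0 + j) (e₂ : j + s = m + s),
      X.res.aug.lin ∘ₗ (X.lift g).f m 0 e₁ ∘ₗ a.f (j + s) m e₂ = g ∘ₗ a.f (j + s) j rfl := by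
    rintro _ rfl _ _
    rw [← LinearMap.comp_assoc, X.aug_comp_lift]
  rw [yoneda_apply X h' f, X.comp_lift_eq h' f ((X.lift g).comp a) (hmid _ (by omega) _ _)]
  rfl

theorem yoneda_assoc {i j k ij jk n : ℕ} (h₁ : ij = i + j) (h₂ : n = ij + k) (h₃ : jk = j + k)
    (h₄ : n = i + jk) (f : X.Cochain X.R i) (f' : X.Cochain X.R j) (g : X.Cochain C k) :
    X.yoneda h₂ (X.yoneda h₁ f f') g = X.yoneda h₄ f (X.yoneda h₃ f' g) :=
  X.yoneda_comp h₁ f f' (X.lift g) h₃ h₂ h₄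

theorem smul_aug_yoneda {j : ℕ} (h : j = 0 + j) (t : F) (g : X.Cochain C j) :
    X.yoneda h (t • X.res.aug.lin : X.Cochain X.R 0) g = t • g := by
  rw [map_smul, LinearMap.smul_apply]
  exact congrArg (t • ·) (X.aug_comp_lift g)

theorem yoneda_smul_aug {i : ℕ} (t : F) (f : X.Cochain X.R i) :
    X.yoneda (add_zero i).symm f (t • X.res.aug.lin : X.Cochain X.R 0) = t • f := by
  rw [map_smul]
  exact congrArg (t • ·) (X.comp_lift_eq _ f (ShiftMap.id X.R) rfl)

theorem yoneda_aug {i : ℕ} (f : X.Cochain X.R i) :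
    X.yoneda (add_zero i).symm f X.res.aug.lin = f :=
  X.comp_lift_eq _ f (ShiftMap.id X.R) rfl

/-- The `n`-th homogeneous component of the Yoneda module of `C`. -/
def ModPiece (C : MinCx 𝒜) (n : ℕ) : Type := X.Cochain C (X.c * n)

/-- The `n`-th homogeneous component of the Yoneda algebra. -/
def AlgPiece (n : ℕ) : Type := X.Cochain X.R (X.c * n)

instance (C : MinCx 𝒜) (n : ℕ) : AddCommGroup (X.ModPiece C n) :=
  inferInstanceAs (AddCommGroup (X.Cochain C (X.c * n)))

instance (C : MinCx 𝒜) (n : ℕ) : Module F (X.ModPiece C n) :=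
  inferInstanceAs (Module F (X.Cochain C (X.c * n)))

instance (n : ℕ) : AddCommGroup (X.AlgPiece n) :=
  inferInstanceAs (AddCommGroup (X.Cochain X.R (X.c * n)))

instance (n : ℕ) : Module F (X.AlgPiece n) :=
  inferInstanceAs (Module F (X.Cochain X.R (X.c * n)))

/-- The action of a homogeneous element of the Yoneda algebra on one of a Yoneda module. -/
def pieceSMul {i j : ℕ} (f : X.AlgPiece i) (g : X.ModPiece C j) : X.ModPiece C (i + j) :=
  X.yoneda (Nat.mul_add X.c i j) f g

/-- The product of homogeneous elements of the Yoneda algebra. -/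
def pieceMul {i j : ℕ} (f : X.AlgPiece i) (g : X.AlgPiece j) : X.AlgPiece (i + j) :=
  X.yoneda (C := X.R) (Nat.mul_add X.c i j) f g

theorem mk_yoneda {n n' i j : ℕ} (hn : n = n') (h : X.c * n = i + j) (h' : X.c * n' = i + j)
    (f : X.Cochain X.R i) (g : X.Cochain C j) :
    GradedMonoid.mk (A := X.ModPiece C) n (X.yoneda h f g) =
      GradedMonoid.mk n' (X.yoneda h' f g) := by
  subst hn
  rfl

theorem mk_smul_aug_yoneda (t : F) {n : ℕ} (g : X.ModPiece C n) :
    GradedMonoid.mk (A := X.ModPiece C) (0 + n)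
      (X.pieceSMul (t • X.res.aug.lin : X.Cochain X.R 0) g) = GradedMonoid.mk n (t • g) :=
  (X.mk_yoneda (zero_add n) _ (zero_add _).symm _ g).trans
    (congrArg (GradedMonoid.mk (A := X.ModPiece C) n) (X.smul_aug_yoneda _ t g))

theorem mk_yoneda_assoc {i j k : ℕ} (f : X.AlgPiece i) (f' : X.AlgPiece j) (g : X.ModPiece C k) :
    GradedMonoid.mk (A := X.ModPiece C) (i + j + k) (X.pieceSMul (X.pieceMul f f') g) =
      GradedMonoid.mk (i + (j + k)) (X.pieceSMul f (X.pieceSMul f' g)) :=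
  (congrArg (GradedMonoid.mk (A := X.ModPiece C) (i + j + k))
    (X.yoneda_assoc (Nat.mul_add X.c i j) _ (Nat.mul_add X.c j k) (by ring) f f' g)).trans
    (X.mk_yoneda (add_assoc i j k) _ _ f _)

theorem mk_aug_yoneda {n : ℕ} (g : X.ModPiece C n) :
    GradedMonoid.mk (A := X.ModPiece C) (0 + n) (X.pieceSMul (X.res.aug.lin : X.Cochain X.R 0) g) =
      GradedMonoid.mk n g := by
  conv_rhs => rw [← one_smul F g, ← mk_smul_aug_yoneda, one_smul]

instance : GradedMonoid.GOne X.AlgPiece := ⟨(X.res.aug.lin : X.Cochain X.R 0)⟩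

instance : GradedMonoid.GMul X.AlgPiece := ⟨X.pieceMul⟩

instance : DirectSum.GRing X.AlgPiece where
  mul := X.pieceMul
  mul_zero f := map_zero (X.yoneda (C := X.R) _ f)
  zero_mul g := LinearMap.map_zero₂ (X.yoneda (C := X.R) _) g
  mul_add f g g' := map_add (X.yoneda (C := X.R) _ f) g g'
  add_mul f f' g := LinearMap.map_add₂ (X.yoneda (C := X.R) _) f f' g
  one := (X.res.aug.lin : X.Cochain X.R 0)
  one_mul g := X.mk_aug_yoneda (C := X.R) g.2
  mul_one f := congrArg (GradedMonoid.mk (A := X.AlgPiece) f.1) (X.yoneda_aug f.2)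
  mul_assoc f f' g := X.mk_yoneda_assoc (C := X.R) f.2 f'.2 g.2
  natCast n := n • (X.res.aug.lin : X.Cochain X.R 0)
  natCast_zero := zero_smul _ _
  natCast_succ n := succ_nsmul _ _
  intCast n := n • (X.res.aug.lin : X.Cochain X.R 0)
  intCast_ofNat n := natCast_zsmul _ n
  intCast_negSucc_ofNat n := negSucc_zsmul _ n

instance : DirectSum.Gmodule X.AlgPiece (X.ModPiece C) where
  smul := X.pieceSMul
  one_smul g := X.mk_aug_yoneda g.2
  mul_smul f f' g := X.mk_yoneda_assoc f.2 f'.2 g.2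
  smul_add f g g' := map_add (X.yoneda _ f) g g'
  smul_zero f := map_zero (X.yoneda _ f)
  add_smul f f' g := LinearMap.map_add₂ (X.yoneda _) f f' g
  zero_smul g := LinearMap.map_zero₂ (X.yoneda _) g

instance : DirectSum.GAlgebra F X.AlgPiece where
  toFun := (LinearMap.toSpanSingleton F (X.AlgPiece 0) X.res.aug.lin).toAddMonoidHom
  map_one := one_smul F (X.res.aug.lin : X.Cochain X.R 0)
  map_mul r s := by
    refine Eq.trans ?_ (X.mk_smul_aug_yoneda (C := X.R) r (n := 0) _).symm
    exact congrArg (GradedMonoid.mk (A := X.AlgPiece) 0) (mul_smul r s _)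
  commutes t f := (X.mk_smul_aug_yoneda (C := X.R) t f.2).trans
    (congrArg (GradedMonoid.mk (A := X.AlgPiece) f.1) (X.yoneda_smul_aug t f.2)).symm
  smul_def t f := (X.mk_smul_aug_yoneda (C := X.R) t f.2).symm

instance : IsScalarTower F (DirectSum ℕ X.AlgPiece) (DirectSum ℕ (X.ModPiece C)) := by
  refine IsScalarTower.of_algebraMap_smul fun t x => ?_
  induction x using DirectSum.induction_on with
  | zero => rw [smul_zero, smul_zero]
  | add x y hx hy => rw [smul_add, smul_add, hx, hy]
  | of n g =>
    rw [DirectSum.algebraMap_apply, DirectSum.Gmodule.of_smul_of, ← DirectSum.of_smul]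
    exact DirectSum.of_eq_of_gradedMonoid_eq (X.mk_smul_aug_yoneda t g)

instance : SMulCommClass (DirectSum ℕ X.AlgPiece) F (DirectSum ℕ (X.ModPiece C)) :=
  IsScalarTower.to_smulCommClass'

end ExtDatum

end YonedaAlgebra

section HomogeneousPieces

variable {F : Type} [Field F] {A : ℕ → Type} [∀ n, AddCommGroup (A n)] [∀ n, Module F (A n)]
  {ι : Type}

variable (F A) in
/-- The grading of `⊕ A_n` indexed by `ι` in which `A_n` has degree `e n`. -/
def homogeneousPiece (e : ℕ → ι) (j : ι) : Submodule F (DirectSum ℕ A) where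
  carrier := {x | ∀ n, e n ≠ j → x n = 0}
  zero_mem' _ _ := rfl
  add_mem' {x y} hx hy n hn := by rw [DirectSum.add_apply, hx n hn, hy n hn, add_zero]
  smul_mem' t x hx n hn := by rw [DirectSum.smul_apply, hx n hn, smul_zero]

namespace homogeneousPiece

variable {e : ℕ → ι}

theorem of_mem (n : ℕ) (a : A n) : DirectSum.of A n a ∈ homogeneousPiece F A e (e n) :=
  fun _ hm => DirectSum.of_eq_of_ne _ _ _ fun h => hm (congrArg e h)

theorem iSup_eq_top : ⨆ j, homogeneousPiece F A e j = ⊤ := by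
  rw [Submodule.eq_top_iff']
  intro x
  induction x using DirectSum.induction_on with
  | zero => exact zero_mem _
  | of n a => exact Submodule.mem_iSup_of_mem (e n) (of_mem n a)
  | add x y hx hy => exact add_mem hx hy

theorem iSupIndep : iSupIndep (homogeneousPiece F A e) := by
  classical
  refine iSupIndep_of_separating (Y := ∀ n, A n) _
    (fun j => LinearMap.pi fun n => if e n = j then DirectSum.component F ℕ A n else 0) ?_ ?_
  · intro i j hij x hx
    funext n
    by_cases h : e n = j
    · simp only [LinearMap.pi_apply, if_pos h]
      exact hx n fun h' => hij (h'.symm.trans h)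
    · simp only [LinearMap.pi_apply, if_neg h, LinearMap.zero_apply, Pi.zero_apply]
  · intro j x hx h
    refine DFinsupp.ext fun n => ?_
    by_cases hn : e n = j
    · have hxn := congrFun h n
      simp only [LinearMap.pi_apply, if_pos hn] at hxn
      exact hxn
    · exact hx n hn

theorem eq_of_of_mem (he : Function.Injective e) {n : ℕ} {x : DirectSum ℕ A}
    (hx : x ∈ homogeneousPiece F A e (e n)) : x = DirectSum.of A n (x n) := by
  refine DFinsupp.ext fun m => ?_
  obtain rfl | h := eq_or_ne m n
  · exact (DirectSum.of_eq_same _ _).symm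
  · exact (hx m fun h' => h (he h')).trans (DirectSum.of_eq_of_ne _ _ _ h).symm

theorem eq_zero_or_exists_of_mem (he : Function.Injective e) {j : ι} {x : DirectSum ℕ A}
    (hx : x ∈ homogeneousPiece F A e j) :
    x = 0 ∨ ∃ n, e n = j ∧ ∃ a, x = DirectSum.of A n a := by
  by_cases hj : ∃ n, e n = j
  · obtain ⟨n, rfl⟩ := hj
    exact .inr ⟨n, rfl, _, eq_of_of_mem he hx⟩
  · exact .inl (DFinsupp.ext fun n => hx n fun h => hj ⟨n, h⟩)

variable (F A) in
/-- The component of degree `e n` is `A_n`, if `e` is injective. -/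
def equiv (he : Function.Injective e) (n : ℕ) : homogeneousPiece F A e (e n) ≃ₗ[F] A n where
  toFun x := x.1 n
  invFun a := ⟨DirectSum.of A n a, of_mem n a⟩
  map_add' _ _ := rfl
  map_smul' _ _ := rfl
  left_inv x := Subtype.ext (eq_of_of_mem he x.2).symm
  right_inv _ := DirectSum.of_eq_same _ _

end homogeneousPiece

end HomogeneousPieces

namespace ExtDatum

section ExtModule

variable {F : Type} [Field F] {𝒜 : GradedAlg F} (X : ExtDatum 𝒜) {C : MinCx 𝒜}

theorem of_smul_of {i j : ℕ} (f : X.AlgPiece i) (g : X.ModPiece C j) :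
    DirectSum.of X.AlgPiece i f • DirectSum.of (X.ModPiece C) j g =
      DirectSum.of (X.ModPiece C) (i + j) (X.pieceSMul f g) :=
  DirectSum.Gmodule.of_smul_of _ _ f g

instance : SetLike.GradedMonoid (homogeneousPiece F X.AlgPiece id) where
  one_mem := homogeneousPiece.of_mem (e := id) 0 _
  mul_mem i j x y hx hy := by
    rw [homogeneousPiece.eq_of_of_mem (n := i) Function.injective_id hx,
      homogeneousPiece.eq_of_of_mem (n := j) Function.injective_id hy, DirectSum.of_mul_of]
    exact homogeneousPiece.of_mem (e := id) (i + j) _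

instance : GradedAlgebra (homogeneousPiece F X.AlgPiece id) :=
  { (DirectSum.isInternal_submodule_of_iSupIndep_of_iSup_eq_top homogeneousPiece.iSupIndep
      homogeneousPiece.iSup_eq_top).chooseDecomposition with }

/-- The Yoneda algebra `⊕_n Ext^{cn}(T, T)`. -/
@[reducible] def extAlgebra : GradedAlg F where
  A := DirectSum ℕ X.AlgPiece
  grading := homogeneousPiece F X.AlgPiece id

/-- The Yoneda module `⊕_n Ext^{cn}(M, T)`, for `C` a resolution of `M`. -/
@[reducible] def extModule (C : MinCx 𝒜) : X.extAlgebra.GMod where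
  M := DirectSum ℕ (X.ModPiece C)
  grading := homogeneousPiece F (X.ModPiece C) Nat.cast
  sup_eq_top := homogeneousPiece.iSup_eq_top
  indep := homogeneousPiece.iSupIndep
  smul_mem {i j b x} hb hx := by
    rw [homogeneousPiece.eq_of_of_mem (n := i) Function.injective_id hb]
    obtain rfl | ⟨n, rfl, g, rfl⟩ :=
      homogeneousPiece.eq_zero_or_exists_of_mem Nat.cast_injective hx
    · rw [smul_zero]
      exact zero_mem _
    · rw [of_smul_of, ← Nat.cast_add]
      exact homogeneousPiece.of_mem (i + n) _

theorem extModule_grading_eq_bot (C : MinCx 𝒜) {j : ℤ} (hj : j < 0) :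
    (X.extModule C).grading j = ⊥ :=
  (Submodule.eq_bot_iff _).2 fun x hx => DFinsupp.ext fun n => hx n (by omega)

end ExtModule

section Pullback

variable {F : Type} [Field F] {𝒜 : GradedAlg F} (X : ExtDatum 𝒜) {C D : MinCx 𝒜} {s : ℕ}
  (a : ShiftMap C D s) {t : ℕ} (hs : s = X.c * t)

/-- The map on homogeneous components of Yoneda modules induced by a shift map. -/
def pullPiece (n : ℕ) : X.ModPiece D n →+ X.ModPiece C (n + t) where
  toFun g := (g : X.Cochain D (X.c * n)) ∘ₗ a.f (X.c * (n + t)) (X.c * n) (by rw [hs, mul_add])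
  map_zero' := LinearMap.zero_comp _
  map_add' _ _ := LinearMap.add_comp _ _ _

/-- The additive map underlying `pull`. -/
def pullAddHom : (X.extModule D).M →+ (X.extModule C).M :=
  DirectSum.toAddMonoid fun n => (DirectSum.of (X.ModPiece C) (n + t)).comp (X.pullPiece a hs n)

theorem pullAddHom_of (n : ℕ) (g : X.ModPiece D n) :
    X.pullAddHom a hs (DirectSum.of (X.ModPiece D) n g) =
      DirectSum.of (X.ModPiece C) (n + t) (X.pullPiece a hs n g) :=
  DirectSum.toAddMonoid_of _ _ _

theorem of_pullPiece_pieceSMul {i n : ℕ} (f : X.AlgPiece i) (g : X.ModPiece D n) :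
    DirectSum.of (X.ModPiece C) (i + n + t) (X.pullPiece a hs (i + n) (X.pieceSMul f g)) =
      DirectSum.of (X.ModPiece C) (i + (n + t)) (X.pieceSMul f (X.pullPiece a hs n g)) := by
  have hdeg : X.c * (i + n + t) = X.c * i + X.c * (n + t) := by ring
  exact DirectSum.of_eq_of_gradedMonoid_eq
    ((congrArg (GradedMonoid.mk (A := X.ModPiece C) (i + n + t))
      (X.yoneda_comp (Nat.mul_add X.c i n) f g a _ _ hdeg)).trans
      (X.mk_yoneda (Nat.add_assoc i n t) _ _ f _))

/-- The morphism of Yoneda modules induced by a shift map. -/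
def pull : (X.extModule D).M →ₗ[X.extAlgebra.A] (X.extModule C).M where
  toFun := X.pullAddHom a hs
  map_add' := map_add _
  map_smul' b x := by
    rw [RingHom.id_apply]
    induction b using DirectSum.induction_on with
    | zero => rw [zero_smul, zero_smul, map_zero]
    | add b b' hb hb' => rw [add_smul, map_add, hb, hb', add_smul]
    | of i f =>
      induction x using DirectSum.induction_on with
      | zero => rw [smul_zero, map_zero, smul_zero]
      | add y y' hy hy' => rw [smul_add, map_add, map_add, smul_add, hy, hy']
      | of n g => rw [of_smul_of, pullAddHom_of, pullAddHom_of, of_smul_of, of_pullPiece_pieceSMul]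

theorem pull_of (n : ℕ) (g : X.ModPiece D n) :
    X.pull a hs (DirectSum.of (X.ModPiece D) n g) =
      DirectSum.of (X.ModPiece C) (n + t) (X.pullPiece a hs n g) :=
  X.pullAddHom_of a hs n g

theorem pull_apply (x : (X.extModule D).M) (n : ℕ) :
    X.pull a hs x (n + t) = X.pullPiece a hs n (x n) := by
  induction x using DirectSum.induction_on with
  | zero => simp only [map_zero, DirectSum.zero_apply]
  | add y y' hy hy' => rw [map_add, DirectSum.add_apply, hy, hy', DirectSum.add_apply, map_add]
  | of m g =>
    rw [pull_of]
    obtain rfl | h := eq_or_ne n m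
    · rw [DirectSum.of_eq_same, DirectSum.of_eq_same]
    · rw [DirectSum.of_eq_of_ne _ _ _ h, DirectSum.of_eq_of_ne _ _ _ (by omega), map_zero]

theorem pull_mem {j : ℤ} {x : (X.extModule D).M} (hx : x ∈ (X.extModule D).grading j) :
    X.pull a hs x ∈ (X.extModule C).grading (j + t) := by
  obtain rfl | ⟨n, rfl, g, rfl⟩ := homogeneousPiece.eq_zero_or_exists_of_mem Nat.cast_injective hx
  · rw [map_zero]
    exact zero_mem _
  · rw [pull_of, ← Nat.cast_add]
    exact homogeneousPiece.of_mem (n + t) _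

/-- The morphism of Yoneda modules induced by a chain map of shift `0`. -/
def pullHom (a : ShiftMap C D 0) : GHom (X.extModule D) (X.extModule C) where
  lin := X.pull a (mul_zero X.c).symm
  grad j _ hx := add_zero j ▸ X.pull_mem a (mul_zero X.c).symm hx

theorem pull_injective
    (ha : ∀ m n h (g : X.Cochain D n), g ∘ₗ a.f m n h = 0 → g = 0) :
    Function.Injective (X.pull a hs) :=
  (injective_iff_map_eq_zero _).2 fun x hx => DFinsupp.ext fun n =>
    ha _ _ _ _ ((X.pull_apply a hs x n).symm.trans (by rw [hx]; rfl))

theorem pull_surjective (a : ShiftMap C D 0)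
    (ha : ∀ n (f : X.Cochain C n), ∃ g : X.Cochain D n, g ∘ₗ a.f n n rfl = f) :
    Function.Surjective (X.pullHom a).lin := by
  intro y
  induction y using DirectSum.induction_on with
  | zero => exact ⟨0, map_zero _⟩
  | add y y' hy hy' =>
    obtain ⟨⟨x, rfl⟩, ⟨x', rfl⟩⟩ := hy, hy'
    exact ⟨x + x', map_add _ _ _⟩
  | of n f =>
    obtain ⟨g, hg⟩ := ha (X.c * n) f
    exact ⟨DirectSum.of (X.ModPiece D) n g,
      (X.pull_of a _ n g).trans (congrArg (DirectSum.of (X.ModPiece C) n) hg)⟩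

end Pullback

variable {F : Type} [Field F] {𝒜 : GradedAlg F} (X : ExtDatum 𝒜)

/-- The Yoneda algebra is the Yoneda module of the resolution of `T`. -/
def algebraEquivModule : X.extAlgebra.A ≃ₗ[X.extAlgebra.A] (X.extModule X.R).M where
  toFun x := x
  invFun x := x
  map_add' _ _ := rfl
  map_smul' _ _ := rfl
  left_inv _ := rfl
  right_inv _ := rfl

theorem extModule_R_genInDeg : (X.extModule X.R).GenInDeg 0 := by
  refine (Submodule.eq_top_iff').2 fun x => ?_
  have hx : x = X.algebraEquivModule.symm x • X.algebraEquivModule 1 := by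
    rw [← map_smul, smul_eq_mul, mul_one, LinearEquiv.apply_symm_apply]
  rw [hx]
  exact Submodule.smul_mem _ _ (Submodule.subset_span
    (homogeneousPiece.of_mem (A := X.ModPiece X.R) (e := Nat.cast) 0 _))

variable {Q : MinCx 𝒜}

theorem exists_retraction_of_isRetractPow (hQ : MinCx.IsRetractPow X.T X.R Q) :
    ∃ (r : ℕ) (i : (X.extModule Q).M →ₗ[X.extAlgebra.A] ((X.extModule X.R).pow r).M)
      (p : GHom ((X.extModule X.R).pow r) (X.extModule Q)), p.lin ∘ₗ i = LinearMap.id := by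
  obtain ⟨r, u, v, huv⟩ := hQ
  refine ⟨r, LinearMap.pi fun l => (X.pullHom (u l)).lin,
    ⟨∑ l, (X.pullHom (v l)).lin ∘ₗ LinearMap.proj l, fun j x hx => ?_⟩, ?_⟩
  · rw [LinearMap.sum_apply]
    exact sum_mem fun l _ => (X.pullHom (v l)).grad j _ (hx l trivial)
  · refine LinearMap.ext fun x => DFinsupp.ext fun n => ?_
    rw [LinearMap.comp_apply, LinearMap.sum_apply]
    refine Eq.trans (map_sum (DirectSum.component F ℕ (X.ModPiece Q) n) _ _) ?_
    refine (Finset.sum_congr rfl fun l _ => ?_).trans (huv (X.c * n) (x n))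
    exact (X.pull_apply (v l) (mul_zero X.c).symm _ n).trans
      (congrArg _ (X.pull_apply (u l) (mul_zero X.c).symm x n))

theorem projective_of_isRetractPow (hQ : MinCx.IsRetractPow X.T X.R Q) :
    Module.Projective X.extAlgebra.A (X.extModule Q).M := by
  obtain ⟨r, i, p, hpi⟩ := X.exists_retraction_of_isRetractPow hQ
  have := Module.Projective.of_equiv X.algebraEquivModule
  have : Module.Projective X.extAlgebra.A ((X.extModule X.R).pow r).M := projective_pi
  exact Module.Projective.of_split i p.lin hpi

theorem finite_of_isRetractPow (hQ : MinCx.IsRetractPow X.T X.R Q) :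
    Module.Finite X.extAlgebra.A (X.extModule Q).M := by
  obtain ⟨r, i, p, hpi⟩ := X.exists_retraction_of_isRetractPow hQ
  have := Module.Finite.equiv X.algebraEquivModule
  exact Module.Finite.of_surjective p.lin fun x => ⟨i x, LinearMap.congr_fun hpi x⟩

theorem genInDeg_of_isRetractPow (hQ : MinCx.IsRetractPow X.T X.R Q) :
    (X.extModule Q).GenInDeg 0 := by
  obtain ⟨r, i, p, hpi⟩ := X.exists_retraction_of_isRetractPow hQ
  exact (X.extModule_R_genInDeg.pow r).of_surjective p
    fun x => ⟨i x, LinearMap.congr_fun hpi x⟩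

end ExtDatum

section LinearResolutions

variable {F : Type} [Field F] {𝒜 : GradedAlg F}

/-- A short exact sequence `0 → N'(-1) → P → N → 0` of graded modules, with `P` finitely generated
projective and generated in degree `0`: one step of a linear resolution of `N`. -/
structure LinearStep (N N' : 𝒜.GMod) where
  P : 𝒜.GMod
  fg : Module.Finite 𝒜.A P.M
  projective : Module.Projective 𝒜.A P.M
  genInDeg : P.GenInDeg 0
  π : GHom P N
  ι : GHom N' (P.shift 1)
  surjective : Function.Surjective π.lin
  injective : Function.Injective ι.lin
  exact : LinearMap.range ι.lin = LinearMap.ker π.lin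

namespace LinearStep

/-- The differential obtained by splicing two steps, in degrees shifted by `-i`. -/
def splice {N N' N'' : 𝒜.GMod} (L : LinearStep N N') (L' : LinearStep N' N'') (i : ℕ) :
    GHom (L'.P.shift (-(i + 1 : ℕ))) (L.P.shift (-i)) where
  lin := L.ι.lin ∘ₗ L'.π.lin
  grad j x hx := by
    have hdeg : j + -((i + 1 : ℕ) : ℤ) + 1 = j + -(i : ℤ) := by push_cast; ring
    have hmem : L.ι.lin (L'.π.lin x) ∈ L.P.grading (j + -((i + 1 : ℕ) : ℤ) + 1) :=
      L.ι.grad _ _ (L'.π.grad _ _ hx)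
    rwa [hdeg] at hmem

variable {N N' N'' : 𝒜.GMod} (L : LinearStep N N') (L' : LinearStep N' N'') (i : ℕ)

theorem range_splice : LinearMap.range (L.splice L' i).lin = LinearMap.ker L.π.lin :=
  (LinearMap.range_comp_of_range_eq_top _ (LinearMap.range_eq_top.2 L'.surjective)).trans L.exact

theorem ker_splice : LinearMap.ker (L.splice L' i).lin = LinearMap.ker L'.π.lin :=
  LinearMap.ker_comp_of_ker_eq_bot _ (LinearMap.ker_eq_bot.2 L.injective)

theorem genInDeg_shift : (L.P.shift (-i)).GenInDeg i := L.genInDeg.shift (add_neg_cancel _)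

end LinearStep

theorem IsKoszulMod.of_linearSteps (N : ℕ → 𝒜.GMod) (L : ∀ i, LinearStep (N i) (N (i + 1))) :
    𝒜.IsKoszulMod (N 0) :=
  ⟨{ P i := (L i).P.shift (-i)
     d i := (L i).splice (L (i + 1)) i
     aug := ⟨(L 0).π.lin, fun j x hx => (L 0).π.grad j x (add_zero j ▸ hx)⟩
     fg i := (L i).fg
     projective i := (L i).projective
     aug_surj := (L 0).surjective
     exact_aug := (L 0).range_splice (L 1) 0
     exact i := ((L (i + 1)).range_splice (L (i + 2)) (i + 1)).trans
      ((L i).ker_splice (L (i + 1)) i).symm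
     minimal i := ((L (i + 1)).genInDeg_shift (i + 1)).range_le_jideal_smul_top
      ((L i).genInDeg_shift i) (by omega) _ },
    fun i => (L i).genInDeg_shift i⟩

theorem IsKoszulMod.of_bijective {N N' : 𝒜.GMod} (hN : 𝒜.IsKoszulMod N) (f : GHom N N')
    (hf : Function.Bijective f.lin) : 𝒜.IsKoszulMod N' := by
  obtain ⟨R, hR⟩ := hN
  exact ⟨{ R with
    aug := f.comp R.aug
    aug_surj := hf.2.comp R.aug_surj
    exact_aug := R.exact_aug.trans
      (LinearMap.ker_comp_of_ker_eq_bot _ (LinearMap.ker_eq_bot.2 hf.1)).symm }, hR⟩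

end LinearResolutions

namespace ExtDatum

variable {F : Type} [Field F] {𝒜 : GradedAlg F} (X : ExtDatum 𝒜) {δ : ℕ → ℤ} {C : MinCx 𝒜}

section Cover

variable (K : MinCx.Cover X.T X.R δ X.c C)

theorem pullHom_α_surjective : Function.Surjective (X.pullHom K.α.toShiftMap).lin :=
  X.pull_surjective _ fun n f => by
    obtain ⟨ρ, hρ⟩ := K.exists_retraction n
    exact ⟨f ∘ₗ ρ, (LinearMap.comp_assoc _ _ _).trans (congrArg (f ∘ₗ ·) hρ)⟩

theorem pull_β_injective : Function.Injective (X.pull K.β (mul_one X.c).symm) :=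
  X.pull_injective _ _ fun m n h _ hg =>
    (LinearMap.cancel_right (K.surjective m n h)).1 (hg.trans (LinearMap.zero_comp _).symm)

theorem eq_zero_of_comp_α_zero {g : X.Cochain K.Q 0} (hg : g ∘ₗ (K.α.f 0).lin = 0) : g = 0 := by
  have hle : LinearMap.range (K.α.f 0).lin ⊔ 𝒜.jideal • (⊤ : Submodule 𝒜.A (K.Q.P 0).M) ≤
      LinearMap.ker g :=
    sup_le (LinearMap.range_le_ker_iff.2 hg) fun _ hx => X.killedByJ.map_eq_zero g hx
  exact LinearMap.ker_eq_top.1 (top_le_iff.1 (K.sup_eq_top ▸ hle))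

theorem exists_comp_β_eq {m n : ℕ} (h : m = n + X.c) {g : X.Cochain K.Q m}
    (hg : g ∘ₗ (K.α.f m).lin = 0) : ∃ g' : X.Cochain K.S n, g' ∘ₗ K.β.f m n h = g := by
  have hker : LinearMap.ker (K.β.f m n h) ≤ LinearMap.ker g :=
    K.ker_eq m n h ▸ LinearMap.range_le_ker_iff.2 hg
  let e := (K.β.f m n h).quotKerEquivOfSurjective (K.surjective m n h)
  have he (x : (K.Q.P m).M) : e.symm (K.β.f m n h x) = Submodule.Quotient.mk x :=
    e.symm_apply_eq.2 rfl
  exact ⟨Submodule.liftQ _ g hker ∘ₗ e.symm.toLinearMap,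
    LinearMap.ext fun x => congrArg (Submodule.liftQ _ g hker) (he x)⟩

theorem range_pull_β : LinearMap.range (X.pull K.β (mul_one X.c).symm) =
    LinearMap.ker (X.pullHom K.α.toShiftMap).lin := by
  classical
  refine le_antisymm (LinearMap.range_le_ker_iff.2 (LinearMap.ext fun y => ?_)) fun x hx => ?_
  · induction y using DirectSum.induction_on with
    | zero => rw [map_zero, map_zero]
    | add y y' hy hy' => rw [map_add, map_add, hy, hy']
    | of n g =>
      have hβα : K.β.f (X.c * (n + 1)) (X.c * n) (mul_add_one X.c n) ∘ₗ
          (K.α.f (X.c * (n + 1))).lin = 0 :=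
        LinearMap.range_le_ker_iff.1 (K.ker_eq _ _ _).ge
      have hzero : X.pullPiece K.α.toShiftMap (mul_zero X.c).symm (n + 1)
          (X.pullPiece K.β (mul_one X.c).symm n g) = 0 :=
        (LinearMap.comp_assoc _ _ _).trans
          ((congrArg ((g : X.Cochain K.S (X.c * n)) ∘ₗ ·) hβα).trans (LinearMap.comp_zero _))
      rw [LinearMap.comp_apply, pull_of]
      exact (X.pull_of _ _ _ _).trans ((congrArg _ hzero).trans (map_zero _))
  · have hcomp (n : ℕ) : (x n : X.Cochain K.Q (X.c * n)) ∘ₗ (K.α.f (X.c * n)).lin = 0 :=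
      (X.pull_apply K.α.toShiftMap (mul_zero X.c).symm x n).symm.trans
        (congrArg (fun y : (X.extModule C).M => y n) hx)
    rw [← DirectSum.sum_support_of x]
    refine sum_mem fun n _ => ?_
    cases n with
    | zero =>
      have hx0 : x 0 = 0 := X.eq_zero_of_comp_α_zero K (hcomp 0)
      rw [hx0, map_zero]
      exact zero_mem _
    | succ n =>
      obtain ⟨g, hg⟩ := X.exists_comp_β_eq K (n := X.c * n) (mul_add_one X.c n) (hcomp (n + 1))
      exact ⟨DirectSum.of (X.ModPiece K.S) n g,
        (X.pull_of K.β _ n g).trans (congrArg (DirectSum.of (X.ModPiece K.Q) (n + 1)) hg)⟩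

/-- A cover of `C` gives a step of a linear resolution of its Yoneda module. -/
def linearStep : LinearStep (X.extModule C) (X.extModule K.S) where
  P := X.extModule K.Q
  fg := X.finite_of_isRetractPow K.isRetractPow
  projective := X.projective_of_isRetractPow K.isRetractPow
  genInDeg := X.genInDeg_of_isRetractPow K.isRetractPow
  π := X.pullHom K.α.toShiftMap
  ι := ⟨X.pull K.β (mul_one X.c).symm, fun _ _ hx => X.pull_mem _ _ hx⟩
  surjective := X.pullHom_α_surjective K
  injective := X.pull_β_injective K
  exact := X.range_pull_β K

end Cover

theorem isKoszulMod_extModule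
    (hcover : ∀ D : MinCx 𝒜, D.GenIn δ → Nonempty (MinCx.Cover X.T X.R δ X.c D))
    (hC : C.GenIn δ) : X.extAlgebra.IsKoszulMod (X.extModule C) := by
  let cover (D : {D : MinCx 𝒜 // D.GenIn δ}) := (hcover D.1 D.2).some
  let iterate : ℕ → {D : MinCx 𝒜 // D.GenIn δ} :=
    fun i => Nat.rec ⟨C, hC⟩ (fun _ D => ⟨(cover D).S, (cover D).genIn⟩) i
  exact .of_linearSteps (fun i => X.extModule (iterate i).1)
    fun i => X.linearStep (cover (iterate i))

end ExtDatum

section ExtGroups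

variable {F : Type} [Field F] {𝒜 : GradedAlg F}

section Minimality

variable {T M : 𝒜.GMod} (hT : 𝒜.KilledByJ T.M) (R : MinRes M)
include hT

theorem KilledByJ.mem_cocyc {n : ℕ} (f : HomSp T R n) : f ∈ cocyc T R n :=
  R.toMinCx.comp_d_eq_zero hT f

theorem KilledByJ.cobound_eq_bot (n : ℕ) : cobound T R n = ⊥ := by
  cases n with
  | zero => rfl
  | succ n => exact LinearMap.range_eq_bot.2 (LinearMap.ext fun f => hT.mem_cocyc R f)

theorem KilledByJ.extRel_eq_bot (n : ℕ) : extRel T R n = ⊥ := by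
  rw [extRel, hT.cobound_eq_bot R n]
  exact Submodule.ker_subtype _

/-- The identification of `Ext^n(M, T)` with the cochains of a minimal resolution of `M`. -/
def KilledByJ.extEquiv (n : ℕ) : HomSp T R n ≃ₗ[F] ExtQ T R n :=
  (LinearEquiv.ofTop (cocyc T R n) (eq_top_iff.2 fun f _ => hT.mem_cocyc R f)).symm ≪≫ₗ
    ((extRel T R n).quotEquivOfEqBot (hT.extRel_eq_bot R n)).symm

end Minimality

namespace ExtDatum

variable (X : ExtDatum 𝒜) {M : 𝒜.GMod} (R : MinRes M)

/-- The lift of a cochain, as a lift in the sense of `IsYonedaMul`. -/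
def chainLift {j : ℕ} (g : HomSp X.T R j) : ChainLift X.T X.res R j g where
  ℓ := (X.lift (C := R.toMinCx) g).f
  comm_aug := X.aug_comp_lift (C := R.toMinCx) g
  comm k := (X.lift (C := R.toMinCx) g).comm (k + j) k rfl _

theorem extEquiv_yoneda
    {μ : ∀ i j : ℕ, ExtQ X.T X.res i →ₗ[F] ExtQ X.T R j →ₗ[F] ExtQ X.T R (i + j)}
    (hμ : IsYonedaMul X.T X.res R μ) {i j k : ℕ} (h : k = i + j)
    (f : HomSp X.T X.res i) (g : HomSp X.T R j) :
    X.killedByJ.extEquiv R k (X.yoneda (C := R.toMinCx) h f g) =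
      extCast X.T R h.symm
        (μ i j (X.killedByJ.extEquiv X.res i f) (X.killedByJ.extEquiv R j g)) := by
  subst h
  exact (hμ i j f (X.killedByJ.mem_cocyc X.res f) g (X.killedByJ.mem_cocyc R g)
    (X.chainLift R g) (X.killedByJ.mem_cocyc R _)).symm

/-- The component of degree `n` of the Yoneda algebra is `Ext^{cn}(T, T)`. -/
def algEquiv (n : ℕ) : X.extAlgebra.grading n ≃ₗ[F] ExtQ X.T X.res (X.c * n) :=
  (homogeneousPiece.equiv F X.AlgPiece Function.injective_id n).trans
    (X.killedByJ.extEquiv X.res (X.c * n))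

/-- The component of degree `n` of the Yoneda module of a resolution of `M` is `Ext^{cn}(M, T)`. -/
def modEquiv (n : ℕ) :
    (X.extModule R.toMinCx).grading (n : ℤ) ≃ₗ[F] ExtQ X.T R (X.c * n) :=
  (homogeneousPiece.equiv F (X.ModPiece R.toMinCx) (e := Nat.cast) Nat.cast_injective n).trans
    (X.killedByJ.extEquiv R (X.c * n))

theorem algEquiv_mul
    {μ : ∀ i j : ℕ, ExtQ X.T X.res i →ₗ[F] ExtQ X.T X.res j →ₗ[F] ExtQ X.T X.res (i + j)}
    (hμ : IsYonedaMul X.T X.res X.res μ) {m n : ℕ} (x : X.extAlgebra.grading m)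
    (y : X.extAlgebra.grading n)
    (hxy : (x : X.extAlgebra.A) * (y : X.extAlgebra.A) ∈ X.extAlgebra.grading (m + n)) :
    X.algEquiv (m + n) ⟨(x : X.extAlgebra.A) * (y : X.extAlgebra.A), hxy⟩ =
      extCast X.T X.res (Nat.mul_add X.c m n).symm
        (μ (X.c * m) (X.c * n) (X.algEquiv m x) (X.algEquiv n y)) := by
  have hcomponent : ((x : X.extAlgebra.A) * (y : X.extAlgebra.A)) (m + n) =
      X.pieceMul ((x : X.extAlgebra.A) m) ((y : X.extAlgebra.A) n) := by
    conv_lhs => rw [homogeneousPiece.eq_of_of_mem (n := m) Function.injective_id x.2,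
      homogeneousPiece.eq_of_of_mem (n := n) Function.injective_id y.2, DirectSum.of_mul_of]
    exact DirectSum.of_eq_same _ _
  exact (congrArg (X.killedByJ.extEquiv X.res (X.c * (m + n))) hcomponent).trans
    (X.extEquiv_yoneda X.res hμ _ _ _)

theorem modEquiv_smul
    {μ : ∀ i j : ℕ, ExtQ X.T X.res i →ₗ[F] ExtQ X.T R j →ₗ[F] ExtQ X.T R (i + j)}
    (hμ : IsYonedaMul X.T X.res R μ) {m n : ℕ} (x : X.extAlgebra.grading m)
    (y : (X.extModule R.toMinCx).grading (n : ℤ))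
    (hxy : (x : X.extAlgebra.A) • (y : (X.extModule R.toMinCx).M) ∈
      (X.extModule R.toMinCx).grading ((m + n : ℕ) : ℤ)) :
    X.modEquiv R (m + n) ⟨(x : X.extAlgebra.A) • (y : (X.extModule R.toMinCx).M), hxy⟩ =
      extCast X.T R (Nat.mul_add X.c m n).symm
        (μ (X.c * m) (X.c * n) (X.algEquiv m x) (X.modEquiv R n y)) := by
  have hcomponent : ((x : X.extAlgebra.A) • (y : (X.extModule R.toMinCx).M)) (m + n) =
      X.pieceSMul ((x : X.extAlgebra.A) m) ((y : (X.extModule R.toMinCx).M) n) := by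
    conv_lhs => rw [homogeneousPiece.eq_of_of_mem (n := m) Function.injective_id x.2,
      homogeneousPiece.eq_of_of_mem (n := n) Nat.cast_injective y.2, of_smul_of]
    exact DirectSum.of_eq_same _ _
  exact (congrArg (X.killedByJ.extEquiv R (X.c * (m + n))) hcomponent).trans
    (X.extEquiv_yoneda R hμ _ _ _)

theorem pullHom_bijective_of_comparison {R' : MinRes M} {u : ShiftMap R.toMinCx R'.toMinCx 0}
    {v : ShiftMap R'.toMinCx R.toMinCx 0}
    (huv : ∀ n, (∀ f : X.Cochain R.toMinCx n, (f ∘ₗ v.f n n rfl) ∘ₗ u.f n n rfl = f) ∧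
      ∀ f : X.Cochain R'.toMinCx n, (f ∘ₗ u.f n n rfl) ∘ₗ v.f n n rfl = f) :
    Function.Bijective (X.pullHom u).lin := by
  refine ⟨X.pull_injective u _ ?_, X.pull_surjective u fun n f => ⟨_, (huv n).1 f⟩⟩
  intro m n h g hg
  obtain rfl : m = n := h
  rw [← (huv m).2 g]
  exact (congrArg (· ∘ₗ v.f m m rfl) hg).trans (LinearMap.zero_comp _)

end ExtDatum

end ExtGroups

theorem jump_mul_add {p : ℕ} (hp : 0 < p) (d k n : ℕ) :
    jump d p (p * k + n) = jump d p n + k * d := by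
  have hquot (m : ℕ) : (m - m % p) / p = m / p :=
    Nat.div_eq_of_eq_mul_right hp (by have := Nat.div_add_mod m p; omega)
  rw [jump, jump, hquot, hquot, Nat.mul_add_mod, Nat.mul_add_div hp]
  ring

theorem ext_submodule_isKoszul_general
    {F : Type} [Field F] (𝒜 : GradedAlg F) (hA : IsSemisimpleRing (𝒜.grading 0))
    (T : 𝒜.GMod) (hT : IsTrivialGMod T) (M : 𝒜.GMod)
    (δ : ℕ → ℤ) (c : ℕ) (s : ℤ) (hc : 1 ≤ c) (hδ : ∀ n, δ (c + n) = δ n + s)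
    (hTδ : ∃ R : MinRes T, ∀ n, (R.P n).GenInDeg (δ n))
    (hMδ : ∃ R : MinRes M, ∀ n, (R.P n).GenInDeg (δ n))
    (RT : MinRes T) (RM : MinRes M)
    (μA : ∀ i j : ℕ, ExtQ T RT i →ₗ[F] ExtQ T RT j →ₗ[F] ExtQ T RT (i + j))
    (hμA : IsYonedaMul T RT RT μA)
    (μM : ∀ i j : ℕ, ExtQ T RT i →ₗ[F] ExtQ T RM j →ₗ[F] ExtQ T RM (i + j))
    (hμM : IsYonedaMul T RT RM μM) :
    ∃ (B : GradedAlg F) (φ : ∀ n : ℕ, B.grading n ≃ₗ[F] ExtQ T RT (c * n))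
      (N : B.GMod) (ψ : ∀ n : ℕ, N.grading (n : ℤ) ≃ₗ[F] ExtQ T RM (c * n)),
      (∀ (m n : ℕ) (x : B.grading m) (y : B.grading n),
        φ (m + n) ⟨(x : B.A) * (y : B.A), SetLike.mul_mem_graded x.2 y.2⟩ =
          extCast T RT (by ring) (μA (c * m) (c * n) (φ m x) (φ n y))) ∧
      (∀ j : ℤ, j < 0 → N.grading j = ⊥) ∧
      (∀ (m n : ℕ) (x : B.grading m) (y : N.grading (n : ℤ)),
        ψ (m + n) ⟨(x : B.A) • (y : N.M), by
            have h := N.smul_mem x.2 y.2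
            rwa [show ((m : ℤ) + (n : ℤ)) = ((m + n : ℕ) : ℤ) by push_cast; ring] at h⟩ =
          extCast T RM (by ring) (μM (c * m) (c * n) (φ m x) (ψ n y))) ∧
      B.IsKoszulMod N := by
  obtain ⟨DT, hDT⟩ := hTδ
  obtain ⟨DM, hDM⟩ := hMδ
  let X : ExtDatum 𝒜 := ⟨T, hT.killedByJ, RT, c⟩
  obtain ⟨u, v, huv⟩ := RM.exists_comparison DM
  have hDM' : X.extAlgebra.IsKoszulMod (X.extModule DM.toMinCx) :=
    X.isKoszulMod_extModule (fun _ hC => MinCx.exists_cover hA hT RT DT hDT hc hδ hC) hDM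
  exact ⟨X.extAlgebra, X.algEquiv, X.extModule RM.toMinCx, X.modEquiv RM,
    fun _ _ x y => X.algEquiv_mul hμA x y _, fun _ => X.extModule_grading_eq_bot RM.toMinCx,
    fun _ _ x y => X.modEquiv_smul RM hμM x y _,
    hDM'.of_bijective _ (X.pullHom_bijective_of_comparison RM (huv X.killedByJ))⟩

end GradedAlg

open GradedAlg in
/-- **Theorem 2.8(1).** Let `A` be piecewise-Koszul with period `p = 3` and jump degree
`d`, and let `M` be a piecewise-Koszul module generated in degree `0`.  Then for every
`k ≥ 1`, `E_k(M) = ⊕_{n≥0} Ext^{3kn}_A(M,A_0)` is a Koszul module over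
`E_k(A) = ⊕_{n≥0} Ext^{3kn}_A(A_0,A_0)`: there are a graded algebra `B` and a graded
`B`-module `N` whose components correspond to the groups `Ext^{3kn}` and whose
multiplication/action corresponds to the Yoneda product/action, such that `N` admits a
minimal graded projective resolution over `B` with `n`-th term generated in degree `n`. -/
theorem ext_submodule_isKoszul
    {F : Type} [Field F] (𝒜 : GradedAlg F) (hA : 𝒜.Standing)
    (d : ℕ) (hd : 3 ≤ d)
    (T : 𝒜.GMod) (hT : IsTrivialGMod T) (hpk : 𝒜.IsPKAlg 3 d T)
    (M : 𝒜.GMod) (hfg : Module.Finite 𝒜.A M.M)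
    (hM0 : M.GenInDeg (0 : ℤ)) (hMpk : 𝒜.IsPKMod 3 d 0 M)
    (RT : MinRes T) (RM : MinRes M)
    (μA : ∀ i j : ℕ, ExtQ T RT i →ₗ[F] ExtQ T RT j →ₗ[F] ExtQ T RT (i + j))
    (hμA : IsYonedaMul T RT RT μA)
    (μM : ∀ i j : ℕ, ExtQ T RT i →ₗ[F] ExtQ T RM j →ₗ[F] ExtQ T RM (i + j))
    (hμM : IsYonedaMul T RT RM μM)
    (k : ℕ) (hk : 1 ≤ k) :
    ∃ (B : GradedAlg F) (φ : ∀ n : ℕ, ↥(B.grading n) ≃ₗ[F] ExtQ T RT (3 * k * n))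
      (N : B.GMod) (ψ : ∀ n : ℕ, ↥(N.grading (n : ℤ)) ≃ₗ[F] ExtQ T RM (3 * k * n)),
      (∀ (m n : ℕ) (x : ↥(B.grading m)) (y : ↥(B.grading n)),
        φ (m + n) ⟨(x : B.A) * (y : B.A), SetLike.mul_mem_graded x.2 y.2⟩ =
          extCast T RT (by ring) (μA (3 * k * m) (3 * k * n) (φ m x) (φ n y))) ∧
      (∀ j : ℤ, j < 0 → N.grading j = ⊥) ∧
      (∀ (m n : ℕ) (x : ↥(B.grading m)) (y : ↥(N.grading (n : ℤ))),
        ψ (m + n) ⟨(x : B.A) • (y : N.M), by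
            have h := N.smul_mem x.2 y.2
            rwa [show ((m : ℤ) + (n : ℤ)) = ((m + n : ℕ) : ℤ) by push_cast; ring] at h⟩ =
          extCast T RM (by ring) (μM (3 * k * m) (3 * k * n) (φ m x) (ψ n y))) ∧
      B.IsKoszulMod N := by
  refine ext_submodule_isKoszul_general 𝒜 hA.semisimple T hT M (fun n => jump d 3 n + 0)
    (3 * k) (k * d : ℕ) (by omega) (fun n => ?_) hpk hMpk RT RM μA hμA μM hμM
  rw [jump_mul_add three_pos]
  push_cast
  ring
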